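/- arXiv:1202.4327 — 7 statements merged into one kernel-verified Lean document; each statement's English description precedes it below -/
import Mathlib

section
/- Let g(h) := ∫₀^∞ s^{-4/3} exp(-h³s - 2/(9s)) ds for h ≥ 0. Then: (a) g is twice differentiable on (0,∞) and satisfies the Airy-type equation g''(h) = 2h·g(h) for all h > 0; (b) g(0) = (9/2)^{1/3}·Γ(1/3); (c) g is bounded on [0,∞) and g(h) → 0 as h → ∞; and (d) g(h) = g(0)·u(h) for all h ≥ 0, where u is the normalized Airy function. -/
open Real MeasureTheory Set Filter Topology

noncomputable section

/-- `g h = ∫₀^∞ s^{-4/3} exp(-h³ s - 2/(9s)) ds` -/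
def g (h : ℝ) : ℝ :=
  ∫ s in Ioi (0:ℝ), s ^ (-(4:ℝ)/3) * Real.exp (-(h ^ 3 * s) - 2 / (9 * s))

/-!
With `I a b c = ∫₀^∞ s^a exp(-c s - b / s) ds`, the function `g` is `h ↦ I (-4/3) (2/9) (h³)`. Each
derivative in `c` raises `a` by one and changes the sign, and integration by parts relates three
consecutive exponents; the powers of `h` coming from the substitution `c = h³` are exactly those
that turn this relation into `g'' = 2 h g`. The inversion `s ↦ 1 / s` exchanges `b` and `c`, which
gives `g 0` as a Gamma integral and the behaviour of the integrand at `0` from that at `∞`.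

If `w'' = q w` with `q ≥ 0`, then `(w ^ 2)'' = 2 (w' ^ 2 + q w ^ 2) ≥ 0`, so `w ^ 2` is convex. A
solution that vanishes at `0` and at infinity is therefore zero; `g - g 0 • u` is one.
-/

section BesselKernel

/-- The integrand `s^a exp(-c s - b / s)` of the modified Bessel functions of the second kind, in
the un-normalised form in which `b` and `c` are allowed to vanish. -/
def besselKernel (a b c s : ℝ) : ℝ :=
  s ^ a * exp (-(c * s) - b / s)

variable {a b c d s : ℝ}

lemma measurable_besselKernel (a b c : ℝ) : Measurable (besselKernel a b c) := by
  unfold besselKernel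
  fun_prop

lemma besselKernel_nonneg (a b c : ℝ) (hs : 0 ≤ s) : 0 ≤ besselKernel a b c s := by
  unfold besselKernel
  positivity

lemma besselKernel_le_rpow_mul_exp (a c : ℝ) (hb : 0 ≤ b) (hs : 0 ≤ s) :
    besselKernel a b c s ≤ s ^ a * exp (-c * s) := by
  have hbs : 0 ≤ b / s := by positivity
  unfold besselKernel
  gcongr
  linarith

lemma antitone_besselKernel (a b : ℝ) (hs : 0 ≤ s) : Antitone fun c => besselKernel a b c s := by
  intro c d hcd
  simp only [besselKernel]
  gcongr

lemma rpow_mul_besselKernel (p a b c : ℝ) (hs : 0 < s) :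
    s ^ p * besselKernel a b c s = besselKernel (p + a) b c s := by
  rw [besselKernel, besselKernel, ← mul_assoc, ← rpow_add hs]

lemma besselKernel_inv (a b c : ℝ) (hs : 0 ≤ s) :
    besselKernel a b c s⁻¹ = besselKernel (-a) c b s := by
  rw [besselKernel, besselKernel, inv_rpow hs, rpow_neg hs, div_inv_eq_mul, ← div_eq_mul_inv]
  ring_nf

-- The left-hand side has the shape of the integrand in `integral_comp_rpow_Ioi` for `p = -1`.
lemma abs_mul_rpow_smul_besselKernel_rpow_neg_one (a b c : ℝ) (hs : 0 < s) :
    (|(-1 : ℝ)| * s ^ ((-1 : ℝ) - 1)) • besselKernel (-a - 2) c b (s ^ (-1 : ℝ)) =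
      besselKernel a b c s := by
  rw [abs_neg, abs_one, one_mul, smul_eq_mul, rpow_neg_one, besselKernel_inv _ _ _ hs.le,
    rpow_mul_besselKernel _ _ _ _ hs]
  ring_nf

lemma tendsto_besselKernel_atTop (a : ℝ) (hb : 0 ≤ b) (hc : 0 < c) :
    Tendsto (besselKernel a b c) atTop (𝓝 0) := by
  refine squeeze_zero' ?_ ?_ (tendsto_rpow_mul_exp_neg_mul_atTop_nhds_zero a c hc)
  all_goals filter_upwards [eventually_ge_atTop 0] with s hs
  · exact besselKernel_nonneg a b c hs
  · exact besselKernel_le_rpow_mul_exp a c hb hs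

lemma tendsto_besselKernel_nhdsGT_zero (a : ℝ) (hb : 0 < b) (hc : 0 ≤ c) :
    Tendsto (besselKernel a b c) (𝓝[>] 0) (𝓝 0) := by
  refine ((tendsto_besselKernel_atTop (-a) hc hb).comp tendsto_inv_nhdsGT_zero).congr' ?_
  filter_upwards [self_mem_nhdsWithin] with s hs
  rw [Function.comp_apply, besselKernel_inv _ _ _ (mem_Ioi.mp hs).le, neg_neg]

lemma hasDerivAt_besselKernel_param (a b c : ℝ) (hs : 0 < s) :
    HasDerivAt (fun c => besselKernel a b c s) (-besselKernel (a + 1) b c s) c := by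
  have exponent : HasDerivAt (fun c => -(c * s) - b / s) (-s) c := by
    simpa using ((hasDerivAt_id c).mul_const s).neg.sub_const (b / s)
  refine (exponent.exp.const_mul (s ^ a)).congr_deriv ?_
  rw [besselKernel, rpow_add_one hs.ne']
  ring

lemma hasDerivAt_exp_neg_mul_sub_div (b c : ℝ) (hs : s ≠ 0) :
    HasDerivAt (fun s => exp (-(c * s) - b / s))
      (exp (-(c * s) - b / s) * (-c + b / s ^ 2)) s := by
  have exponent : HasDerivAt (fun s => -(c * s) - b / s) (-c + b / s ^ 2) s := by
    simp only [div_eq_mul_inv]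
    refine (((hasDerivAt_id s).const_mul c).neg.sub
      ((hasDerivAt_inv hs).const_mul b)).congr_deriv ?_
    ring
  exact exponent.exp

lemma ae_norm_besselKernel_le (a b : ℝ) (hcd : c ≤ d) :
    ∀ᵐ s ∂volume.restrict (Ioi 0), ‖besselKernel a b d s‖ ≤ besselKernel a b c s := by
  filter_upwards [ae_restrict_mem measurableSet_Ioi] with s hs
  rw [norm_of_nonneg (besselKernel_nonneg a b d hs.le)]
  exact antitone_besselKernel a b hs.le hcd

lemma integrableOn_besselKernel_of_neg_one_lt (ha : -1 < a) (hb : 0 ≤ b) (hc : 0 < c) :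
    IntegrableOn (besselKernel a b c) (Ioi 0) := by
  have dominating : IntegrableOn (fun s : ℝ => s ^ a * exp (-c * s)) (Ioi 0) := by
    simpa only [rpow_one] using integrableOn_rpow_mul_exp_neg_mul_rpow ha one_pos hc
  refine dominating.mono' (measurable_besselKernel a b c).aestronglyMeasurable ?_
  filter_upwards [ae_restrict_mem measurableSet_Ioi] with s hs
  rw [norm_of_nonneg (besselKernel_nonneg a b c hs.le)]
  exact besselKernel_le_rpow_mul_exp a c hb hs.le

lemma integrableOn_besselKernel_of_lt_neg_one (ha : a < -1) (hb : 0 < b) (hc : 0 ≤ c) :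
    IntegrableOn (besselKernel a b c) (Ioi 0) := by
  have inverted : IntegrableOn (besselKernel (-a - 2) c b) (Ioi 0) :=
    integrableOn_besselKernel_of_neg_one_lt (by linarith) hc hb
  exact ((integrableOn_Ioi_comp_rpow_iff _ (by norm_num : (-1 : ℝ) ≠ 0)).mpr inverted).congr_fun
    (fun s hs => abs_mul_rpow_smul_besselKernel_rpow_neg_one a b c hs) measurableSet_Ioi

lemma integrableOn_besselKernel (a : ℝ) (hb : 0 < b) (hc : 0 < c) :
    IntegrableOn (besselKernel a b c) (Ioi 0) := by
  have large : IntegrableOn (besselKernel |a| b c) (Ioi 0) :=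
    integrableOn_besselKernel_of_neg_one_lt (by linarith [abs_nonneg a]) hb.le hc
  have small : IntegrableOn (besselKernel (-|a| - 2) b c) (Ioi 0) :=
    integrableOn_besselKernel_of_lt_neg_one (by linarith [abs_nonneg a]) hb hc.le
  refine (large.add small).mono' (measurable_besselKernel a b c).aestronglyMeasurable ?_
  filter_upwards [ae_restrict_mem measurableSet_Ioi] with s hs
  have rpow_le : s ^ a ≤ s ^ |a| + s ^ (-|a| - 2) := by
    rcases le_total 1 s with h1s | hs1
    · exact (rpow_le_rpow_of_exponent_le h1s (le_abs_self a)).trans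
        (le_add_of_nonneg_right (rpow_nonneg hs.le _))
    · exact (rpow_le_rpow_of_exponent_ge hs hs1 (by linarith [neg_abs_le a])).trans
        (le_add_of_nonneg_left (rpow_nonneg hs.le _))
  rw [norm_of_nonneg (besselKernel_nonneg a b c hs.le)]
  simp only [Pi.add_apply, besselKernel, ← add_mul]
  gcongr

end BesselKernel

section BesselIntegral

/-- The integral `∫₀^∞ s^a exp(-c s - b / s) ds`. For `b, c > 0` it equals
`2 (b / c)^((a + 1) / 2) K_{a + 1}(2 √(b c))`, with `K` the modified Bessel function of the second
kind; here it is used as a function of `c`, up to the boundary value `c = 0`. -/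
def besselIntegral (a b c : ℝ) : ℝ :=
  ∫ s in Ioi 0, besselKernel a b c s

variable {a b c : ℝ}

lemma besselIntegral_nonneg (a b c : ℝ) : 0 ≤ besselIntegral a b c :=
  setIntegral_nonneg measurableSet_Ioi fun _ hs => besselKernel_nonneg a b c (mem_Ioi.mp hs).le

lemma besselIntegral_inv (a b c : ℝ) : besselIntegral a b c = besselIntegral (-a - 2) c b := by
  rw [besselIntegral, besselIntegral,
    ← integral_comp_rpow_Ioi (besselKernel (-a - 2) c b) (by norm_num : (-1 : ℝ) ≠ 0)]
  exact setIntegral_congr_fun measurableSet_Ioi fun s hs =>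
    (abs_mul_rpow_smul_besselKernel_rpow_neg_one a b c hs).symm

lemma besselIntegral_zero_left (ha : -1 < a) (hc : 0 < c) :
    besselIntegral a 0 c = (1 / c) ^ (a + 1) * Gamma (a + 1) := by
  rw [← integral_rpow_mul_exp_neg_mul_Ioi (by linarith) hc]
  simp only [besselIntegral, besselKernel, zero_div, sub_zero, add_sub_cancel_right]

lemma besselIntegral_zero_right (ha : a < -1) (hb : 0 < b) :
    besselIntegral a b 0 = (1 / b) ^ (-a - 1) * Gamma (-a - 1) := by
  rw [besselIntegral_inv, besselIntegral_zero_left (by linarith) hb]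
  ring_nf

lemma antitoneOn_besselIntegral (ha : a < -1) (hb : 0 < b) :
    AntitoneOn (besselIntegral a b) (Ici 0) := fun _ hc _ hd hcd =>
  setIntegral_mono_on (integrableOn_besselKernel_of_lt_neg_one ha hb hd)
    (integrableOn_besselKernel_of_lt_neg_one ha hb hc) measurableSet_Ioi
    fun _ hs => antitone_besselKernel a b (mem_Ioi.mp hs).le hcd

lemma continuousOn_besselIntegral (ha : a < -1) (hb : 0 < b) :
    ContinuousOn (besselIntegral a b) (Ici 0) := by
  refine continuousOn_of_dominated
    (fun c _ => (measurable_besselKernel a b c).aestronglyMeasurable)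
    (fun c hc => ae_norm_besselKernel_le a b hc)
    (integrableOn_besselKernel_of_lt_neg_one ha hb le_rfl) (ae_of_all _ fun s => ?_)
  unfold besselKernel
  fun_prop

lemma tendsto_besselIntegral_atTop (a : ℝ) (hb : 0 < b) :
    Tendsto (besselIntegral a b) atTop (𝓝 0) := by
  rw [← integral_zero ℝ ℝ (μ := volume.restrict (Ioi 0))]
  refine tendsto_integral_filter_of_dominated_convergence (besselKernel a b 1)
    (Eventually.of_forall fun c => (measurable_besselKernel a b c).aestronglyMeasurable)
    ((eventually_ge_atTop 1).mono fun c hc => ae_norm_besselKernel_le a b hc)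
    (integrableOn_besselKernel a hb one_pos) ?_
  filter_upwards [ae_restrict_mem measurableSet_Ioi] with s hs
  have exponent : Tendsto (fun c => -(c * s) - b / s) atTop atBot :=
    tendsto_atBot_add_const_right _ _
      (tendsto_neg_atTop_atBot.comp (tendsto_id.atTop_mul_const hs))
  simpa only [besselKernel, Function.comp_def, mul_zero] using
    (tendsto_exp_atBot.comp exponent).const_mul (s ^ a)

lemma hasDerivAt_besselIntegral (a : ℝ) (hb : 0 < b) (hc : 0 < c) :
    HasDerivAt (besselIntegral a b) (-besselIntegral (a + 1) b c) c := by
  rw [besselIntegral, ← integral_neg]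
  refine (hasDerivAt_integral_of_dominated_loc_of_deriv_le
    (F := besselKernel a b) (F' := fun x s => -besselKernel (a + 1) b x s)
    (bound := besselKernel (a + 1) b (c / 2)) (Ioi_mem_nhds (half_lt_self hc))
    (Eventually.of_forall fun x => (measurable_besselKernel a b x).aestronglyMeasurable)
    (integrableOn_besselKernel a hb hc)
    (measurable_besselKernel (a + 1) b c).neg.aestronglyMeasurable ?_
    (integrableOn_besselKernel (a + 1) hb (half_pos hc)) ?_).2
  all_goals filter_upwards [ae_restrict_mem measurableSet_Ioi] with s hs x hx
  · rw [norm_neg, norm_of_nonneg (besselKernel_nonneg (a + 1) b x hs.le)]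
    exact antitone_besselKernel (a + 1) b hs.le hx.le
  · exact hasDerivAt_besselKernel_param a b x hs

lemma hasDerivAt_besselIntegral_cube (a : ℝ) (hb : 0 < b) {h : ℝ} (hh : 0 < h) :
    HasDerivAt (fun x => besselIntegral a b (x ^ 3))
      (-(3 * h ^ 2 * besselIntegral (a + 1) b (h ^ 3))) h := by
  refine ((hasDerivAt_besselIntegral a hb (pow_pos hh 3)).comp (h := fun x => x ^ 3) h
    (hasDerivAt_pow 3 h)).congr_deriv ?_
  push_cast
  ring

lemma besselIntegral_recurrence (a : ℝ) (hb : 0 < b) (hc : 0 < c) :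
    a * besselIntegral (a - 1) b c - c * besselIntegral a b c + b * besselIntegral (a - 2) b c
      = 0 := by
  have int_sub_one : IntegrableOn (fun s => a * besselKernel (a - 1) b c s) (Ioi 0) :=
    (integrableOn_besselKernel (a - 1) hb hc).const_mul a
  have int_self : IntegrableOn (fun s => c * besselKernel a b c s) (Ioi 0) :=
    (integrableOn_besselKernel a hb hc).const_mul c
  have int_sub :
      IntegrableOn (fun s => a * besselKernel (a - 1) b c s - c * besselKernel a b c s) (Ioi 0) :=
    int_sub_one.sub int_self
  have int_sub_two : IntegrableOn (fun s => b * besselKernel (a - 2) b c s) (Ioi 0) :=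
    (integrableOn_besselKernel (a - 2) hb hc).const_mul b
  let E : ℝ → ℝ := fun s => exp (-(c * s) - b / s)
  have deriv_eq : EqOn
      (fun s => a * besselKernel (a - 1) b c s - c * besselKernel a b c s
        + b * besselKernel (a - 2) b c s)
      (fun s => a * s ^ (a - 1) * E s + s ^ a * (E s * (-c + b / s ^ 2))) (Ioi 0) := by
    intro s hs
    simp only [besselKernel, rpow_sub hs, rpow_one, rpow_two, E]
    ring
  have by_parts :
      ∫ s in Ioi 0, (a * s ^ (a - 1) * E s + s ^ a * (E s * (-c + b / s ^ 2))) = 0 - 0 :=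
    integral_Ioi_deriv_mul_eq_sub
      (fun s hs => hasDerivAt_rpow_const (Or.inl (mem_Ioi.mp hs).ne'))
      (fun s hs => hasDerivAt_exp_neg_mul_sub_div b c (mem_Ioi.mp hs).ne')
      ((int_sub.add int_sub_two).congr_fun deriv_eq measurableSet_Ioi)
      (tendsto_besselKernel_nhdsGT_zero a hb hc.le) (tendsto_besselKernel_atTop a hb.le hc)
  rw [sub_zero, ← setIntegral_congr_fun measurableSet_Ioi deriv_eq,
    integral_add int_sub int_sub_two, integral_sub int_sub_one int_self,
    integral_const_mul, integral_const_mul, integral_const_mul] at by_parts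
  exact by_parts

end BesselIntegral

section DecayingSolutions

variable {q w w' : ℝ → ℝ} {a : ℝ}

lemma convexOn_sq_of_hasDerivAt {D : Set ℝ} (hD : Convex ℝ D) (hq : ∀ x ∈ interior D, 0 ≤ q x)
    (hw : ContinuousOn w D) (hw' : ∀ x ∈ interior D, HasDerivAt w (w' x) x)
    (hw'' : ∀ x ∈ interior D, HasDerivAt w' (q x * w x) x) :
    ConvexOn ℝ D fun x => w x ^ 2 := by
  refine convexOn_of_hasDerivWithinAt2_nonneg hD (hw.pow 2) (f' := fun x => 2 * (w x * w' x))
    (f'' := fun x => 2 * (w' x ^ 2 + q x * w x ^ 2)) ?_ ?_ ?_ <;> intro x hx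
  · refine (((hw' x hx).pow 2).congr_deriv ?_).hasDerivWithinAt
    ring
  · refine ((((hw' x hx).mul (hw'' x hx)).const_mul 2).congr_deriv ?_).hasDerivWithinAt
    ring
  · have := hq x hx
    positivity

lemma le_max_of_convexOn_Ici_of_tendsto {f : ℝ → ℝ} {l x : ℝ} (hf : ConvexOn ℝ (Ici a) f)
    (hlim : Tendsto f atTop (𝓝 l)) (hx : a ≤ x) : f x ≤ max (f a) l := by
  refine ge_of_tendsto (tendsto_const_nhds.max hlim) ?_
  filter_upwards [eventually_ge_atTop x] with t hxt
  exact hf.le_max_of_mem_Icc self_mem_Ici (hx.trans hxt) ⟨hx, hxt⟩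

lemma eqOn_zero_of_hasDerivAt_of_tendsto_zero (hq : ∀ x, a < x → 0 ≤ q x)
    (hw : ContinuousOn w (Ici a)) (hwa : w a = 0) (hlim : Tendsto w atTop (𝓝 0))
    (hw' : ∀ x, a < x → HasDerivAt w (w' x) x)
    (hw'' : ∀ x, a < x → HasDerivAt w' (q x * w x) x) : EqOn w 0 (Ici a) := by
  intro x hx
  have convex : ConvexOn ℝ (Ici a) fun x => w x ^ 2 := by
    apply convexOn_sq_of_hasDerivAt (convex_Ici a) (q := q) (w' := w') <;>
      simpa only [interior_Ici]
  have sq_le : w x ^ 2 ≤ max (w a ^ 2) (0 ^ 2) :=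
    le_max_of_convexOn_Ici_of_tendsto convex (hlim.pow 2) hx
  rw [hwa, max_self, zero_pow two_ne_zero] at sq_le
  exact pow_eq_zero_iff two_ne_zero |>.mp (sq_le.antisymm (sq_nonneg _))

end DecayingSolutions

section Airy

variable {h : ℝ}

lemma g_eq_besselIntegral (h : ℝ) : g h = besselIntegral (-4 / 3) (2 / 9) (h ^ 3) := by
  simp only [g, besselIntegral, besselKernel, div_div]

lemma g_zero : g 0 = (9 / 2 : ℝ) ^ ((1 : ℝ) / 3) * Gamma (1 / 3) := by
  rw [g_eq_besselIntegral, zero_pow three_ne_zero,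
    besselIntegral_zero_right (by norm_num) (by norm_num)]
  norm_num

lemma abs_g_le (hh : 0 ≤ h) : |g h| ≤ g 0 := by
  simp only [g_eq_besselIntegral, zero_pow three_ne_zero]
  rw [abs_of_nonneg (besselIntegral_nonneg _ _ _)]
  exact antitoneOn_besselIntegral (by norm_num) (by norm_num) self_mem_Ici (pow_nonneg hh 3)
    (pow_nonneg hh 3)

lemma tendsto_g_atTop : Tendsto g atTop (𝓝 0) := by
  rw [funext g_eq_besselIntegral]
  exact (tendsto_besselIntegral_atTop _ (by norm_num)).comp (tendsto_pow_atTop three_ne_zero)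

lemma continuousOn_g : ContinuousOn g (Ici 0) := by
  rw [funext g_eq_besselIntegral]
  exact (continuousOn_besselIntegral (by norm_num) (by norm_num)).comp
    (continuous_pow 3).continuousOn fun _ hx => mem_Ici.mpr (pow_nonneg hx 3)

lemma hasDerivAt_g (hh : 0 < h) :
    HasDerivAt g (-(3 * h ^ 2 * besselIntegral (-1 / 3) (2 / 9) (h ^ 3))) h := by
  rw [funext g_eq_besselIntegral]
  convert hasDerivAt_besselIntegral_cube (-4 / 3) (by norm_num : (0 : ℝ) < 2 / 9) hh using 5
  norm_num

lemma hasDerivAt_deriv_g (hh : 0 < h) : HasDerivAt (deriv g) (2 * h * g h) h := by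
  have deriv_eq : deriv g =ᶠ[𝓝 h]
      fun x => -(3 * x ^ 2 * besselIntegral (-1 / 3) (2 / 9) (x ^ 3)) := by
    filter_upwards [Ioi_mem_nhds hh] with x hx using (hasDerivAt_g hx).deriv
  have product := (((hasDerivAt_pow 2 h).const_mul 3).mul
    (hasDerivAt_besselIntegral_cube (-1 / 3) (by norm_num : (0 : ℝ) < 2 / 9) hh)).neg
  refine (product.congr_of_eventuallyEq deriv_eq).congr_deriv ?_
  have recurrence :=
    besselIntegral_recurrence (2 / 3) (by norm_num : (0 : ℝ) < 2 / 9) (pow_pos hh 3)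
  rw [show (2 / 3 - 1 : ℝ) = -1 / 3 by norm_num, show (2 / 3 - 2 : ℝ) = -4 / 3 by norm_num]
    at recurrence
  rw [show (-1 / 3 + 1 : ℝ) = 2 / 3 by norm_num, g_eq_besselIntegral]
  push_cast
  linear_combination (-9 * h) * recurrence

lemma eqOn_g_of_airy {u u' : ℝ → ℝ} (hu : ContinuousOn u (Ici 0)) (hu_zero : u 0 = 1)
    (hu_lim : Tendsto u atTop (𝓝 0)) (hu' : ∀ h, 0 < h → HasDerivAt u (u' h) h)
    (hu'' : ∀ h, 0 < h → HasDerivAt u' (2 * h * u h) h) :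
    EqOn g (fun h => g 0 * u h) (Ici 0) := by
  have diff_eq_zero : EqOn (fun h => g h - g 0 * u h) 0 (Ici 0) := by
    refine eqOn_zero_of_hasDerivAt_of_tendsto_zero (q := fun h => 2 * h)
      (w' := fun h => deriv g h - g 0 * u' h) (fun h hh => by positivity)
      (continuousOn_g.sub (hu.const_mul (g 0))) (by simp [hu_zero])
      (by simpa using tendsto_g_atTop.sub (hu_lim.const_mul (g 0))) (fun h hh => ?_)
      (fun h hh => ?_)
    · exact (hasDerivAt_g hh).differentiableAt.hasDerivAt.sub ((hu' h hh).const_mul (g 0))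
    · refine ((hasDerivAt_deriv_g hh).sub ((hu'' h hh).const_mul (g 0))).congr_deriv ?_
      ring
  exact fun h hh => sub_eq_zero.mp (diff_eq_zero hh)

end Airy

/-- `g` satisfies the Airy-type ODE on `(0,∞)`, `g 0 = (9/2)^{1/3} Γ(1/3)`,
`g` is bounded on `[0,∞)` with `g → 0` at `∞`, and `g = g 0 • u` on `[0,∞)`,
where `u` is the normalized Airy function. -/
theorem stmt0
    (u : ℝ → ℝ) (hu_smooth : ContDiff ℝ 2 u)
    (hu_ode : ∀ h : ℝ, deriv (deriv u) h = 2 * h * u h)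
    (hu_zero : u 0 = 1)
    (hu'_zero : deriv u 0 = -((6:ℝ) ^ ((1:ℝ)/3) * Real.Gamma (2/3) / Real.Gamma (1/3)))
    (hu_pos : ∀ h : ℝ, 0 ≤ h → 0 < u h)
    (hu_anti : StrictAntiOn u (Ici 0))
    (hu_lim : Tendsto u atTop (𝓝 0)) :
    ((∀ h : ℝ, 0 < h → DifferentiableAt ℝ g h) ∧
     (∀ h : ℝ, 0 < h → DifferentiableAt ℝ (deriv g) h) ∧
     (∀ h : ℝ, 0 < h → deriv (deriv g) h = 2 * h * g h)) ∧
    g 0 = (9/2 : ℝ) ^ ((1:ℝ)/3) * Real.Gamma (1/3) ∧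
    ((∃ M : ℝ, ∀ h : ℝ, 0 ≤ h → |g h| ≤ M) ∧ Tendsto g atTop (𝓝 0)) ∧
    (∀ h : ℝ, 0 ≤ h → g h = g 0 * u h) := by
  have hu_deriv (h : ℝ) : HasDerivAt u (deriv u h) h :=
    (hu_smooth.differentiable two_ne_zero h).hasDerivAt
  have hu_deriv2 (h : ℝ) : HasDerivAt (deriv u) (2 * h * u h) h :=
    hu_ode h ▸ (hu_smooth.differentiable_deriv_two h).hasDerivAt
  refine ⟨⟨fun h hh => ?_, fun h hh => ?_, fun h hh => ?_⟩, g_zero,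
    ⟨⟨g 0, fun h hh => abs_g_le hh⟩, tendsto_g_atTop⟩, fun h hh => ?_⟩
  · exact (hasDerivAt_g hh).differentiableAt
  · exact (hasDerivAt_deriv_g hh).differentiableAt
  · exact (hasDerivAt_deriv_g hh).deriv
  · exact eqOn_g_of_airy hu_smooth.continuous.continuousOn hu_zero hu_lim
      (fun h _ => hu_deriv h) (fun h _ => hu_deriv2 h) hh
end
end

section
/- If f : [0,∞) → ℝ is continuous, twice continuously differentiable on (0,∞), bounded, satisfies f''(h) = 2h·f(h) for all h > 0, and f(0) = 1, then f(h) = u(h) for all h ≥ 0, where u is the normalized Airy function. In other words, u restricted to [0,∞) is the unique bounded solution of the boundary value problem f'' = 2h·f, f(0) = 1. -/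
open Real MeasureTheory Set Filter Topology

noncomputable section

/-!
If `w` is the difference of two solutions of `y'' = F(x, y)` with `F(x, ·)` monotone, meaning
`⟪y - z, F(x, y) - F(x, z)⟫ ≥ 0`, then `⟪w, w''⟫ ≥ 0`, hence `(‖w‖²)'' = 2 (⟪w, w''⟫ + ‖w'‖²) ≥ 0`
and `‖w‖²` is convex. A convex function bounded above on a ray cannot increase, so if `w` is bounded
and vanishes at the endpoint, it vanishes everywhere. For the Airy equation, `F(x, y) = 2xy` is
monotone in `y` because `x ≥ 0`.
-/

theorem antitoneOn_of_convexOn_of_bddAbove {𝕜 : Type*} [Field 𝕜] [LinearOrder 𝕜]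
    [IsStrictOrderedRing 𝕜] {s : Set 𝕜} {g : 𝕜 → 𝕜} (hg : ConvexOn 𝕜 s g) (hs : IsUpperSet s)
    (hbdd : BddAbove (g '' s)) : AntitoneOn g s := by
  intro x hx y hy hxy
  by_contra! hlt
  obtain ⟨M, hM⟩ := hbdd
  have hxy : x < y := hxy.lt_of_ne fun h ↦ hlt.ne (congrArg g h)
  have hyM : g y ≤ M := hM (mem_image_of_mem g hy)
  set m := (g y - g x) / (y - x)
  have hm : 0 < m := div_pos (sub_pos.2 hlt) (sub_pos.2 hxy)
  -- The line through the graph points over `x` and `y` reaches height `M + 1` at `z`.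
  set z := y + (M + 1 - g y) / m with hz_def
  have hyz : y < z := lt_add_of_pos_right y (div_pos (by linarith) hm)
  have hz : z ∈ s := hs hyz.le hy
  have hslope : m ≤ (g z - g y) / (z - y) := hg.slope_mono_adjacent hx hz hxy hyz
  have hgz : M + 1 ≤ g z := by
    have hmul : m * (z - y) = M + 1 - g y := by
      rw [hz_def, add_sub_cancel_left, mul_div_cancel₀ _ hm.ne']
    rw [le_div_iff₀ (sub_pos.2 hyz), hmul] at hslope
    linarith
  linarith [hM (mem_image_of_mem g hz)]

theorem hasDerivAt_deriv_of_contDiffOn_two {𝕜 F : Type*} [NontriviallyNormedField 𝕜]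
    [NormedAddCommGroup F] [NormedSpace 𝕜 F] {s : Set 𝕜} {f : 𝕜 → F} (hf : ContDiffOn 𝕜 2 f s)
    (hs : IsOpen s) {x : 𝕜} (hx : x ∈ s) :
    HasDerivAt f (deriv f x) x ∧ HasDerivAt (deriv f) (deriv (deriv f) x) x := by
  have hf' : ContDiffOn 𝕜 1 (deriv f) s := hf.deriv_of_isOpen hs (by norm_num)
  have hxs : s ∈ 𝓝 x := hs.mem_nhds hx
  exact ⟨((hf.differentiableOn two_ne_zero).differentiableAt hxs).hasDerivAt,
    ((hf'.differentiableOn one_ne_zero).differentiableAt hxs).hasDerivAt⟩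

theorem norm_le_of_antitoneOn_of_nonneg {α : Type*} [Preorder α] {a : α} {g : α → ℝ}
    (hg : AntitoneOn g (Ici a)) {x : α} (hx : x ∈ Ici a) (hnonneg : 0 ≤ g x) : ‖g x‖ ≤ g a :=
  (norm_of_nonneg hnonneg).trans_le (hg self_mem_Ici hx hx)

theorem inner_sub_sub_nonneg_of_monotone {g : ℝ → ℝ} (hg : Monotone g) (y z : ℝ) :
    0 ≤ inner ℝ (y - z) (g y - g z) :=
  monovary_iff_forall_mul_nonneg.1 (monovary_id_iff.2 hg) z y

section InnerProductSpace

open scoped InnerProductSpace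

variable {E : Type*} [NormedAddCommGroup E] [InnerProductSpace ℝ E]

theorem convexOn_norm_sq_of_inner_deriv2_nonneg {D : Set ℝ} (hD : Convex ℝ D) {w w' w'' : ℝ → E}
    (hw : ContinuousOn w D) (hw' : ∀ x ∈ interior D, HasDerivAt w (w' x) x)
    (hw'' : ∀ x ∈ interior D, HasDerivAt w' (w'' x) x)
    (hnonneg : ∀ x ∈ interior D, 0 ≤ ⟪w x, w'' x⟫_ℝ) :
    ConvexOn ℝ D fun x ↦ ‖w x‖ ^ 2 :=
  convexOn_of_hasDerivWithinAt2_nonneg hD (hw.norm.pow 2)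
    (f' := fun x ↦ 2 * ⟪w x, w' x⟫_ℝ) (f'' := fun x ↦ 2 * (⟪w x, w'' x⟫_ℝ + ⟪w' x, w' x⟫_ℝ))
    (fun x hx ↦ (hw' x hx).norm_sq.hasDerivWithinAt)
    (fun x hx ↦ (((hw' x hx).inner ℝ (hw'' x hx)).const_mul 2).hasDerivWithinAt)
    fun x hx ↦ mul_nonneg zero_le_two (add_nonneg (hnonneg x hx) real_inner_self_nonneg)

theorem eqOn_zero_of_inner_deriv2_nonneg_of_bounded {a : ℝ} {w w' w'' : ℝ → E}
    (hw : ContinuousOn w (Ici a)) (hw' : ∀ x ∈ Ioi a, HasDerivAt w (w' x) x)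
    (hw'' : ∀ x ∈ Ioi a, HasDerivAt w' (w'' x) x)
    (hnonneg : ∀ x ∈ Ioi a, 0 ≤ ⟪w x, w'' x⟫_ℝ)
    (hbdd : ∃ M, ∀ x ∈ Ici a, ‖w x‖ ≤ M) (ha : w a = 0) : EqOn w 0 (Ici a) := by
  obtain ⟨M, hM⟩ := hbdd
  have hconv : ConvexOn ℝ (Ici a) fun x ↦ ‖w x‖ ^ 2 := by
    rw [← interior_Ici] at hw' hw'' hnonneg
    exact convexOn_norm_sq_of_inner_deriv2_nonneg (convex_Ici a) hw hw' hw'' hnonneg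
  have hanti : AntitoneOn (fun x ↦ ‖w x‖ ^ 2) (Ici a) :=
    antitoneOn_of_convexOn_of_bddAbove hconv (isUpperSet_Ici a)
      ⟨M ^ 2, forall_mem_image.2 fun x hx ↦ pow_le_pow_left₀ (norm_nonneg _) (hM x hx) 2⟩
  intro x hx
  have hle : ‖w x‖ ^ 2 ≤ 0 := by simpa [ha] using hanti self_mem_Ici hx hx
  simpa using hle.antisymm (sq_nonneg _)

theorem stmt1_general {a : ℝ} {F : ℝ → E → E}
    (hF : ∀ x ∈ Ioi a, ∀ y z, 0 ≤ ⟪y - z, F x y - F x z⟫_ℝ) {f g : ℝ → E}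
    (hf_cont : ContinuousOn f (Ici a)) (hf_C2 : ContDiffOn ℝ 2 f (Ioi a))
    (hf_ode : ∀ x ∈ Ioi a, deriv (deriv f) x = F x (f x))
    (hg_cont : ContinuousOn g (Ici a)) (hg_C2 : ContDiffOn ℝ 2 g (Ioi a))
    (hg_ode : ∀ x ∈ Ioi a, deriv (deriv g) x = F x (g x))
    (hbdd : ∃ M, ∀ x ∈ Ici a, ‖f x - g x‖ ≤ M) (ha : f a = g a) : EqOn f g (Ici a) := by
  have hf_deriv x (hx : x ∈ Ioi a) := hasDerivAt_deriv_of_contDiffOn_two hf_C2 isOpen_Ioi hx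
  have hg_deriv x (hx : x ∈ Ioi a) := hasDerivAt_deriv_of_contDiffOn_two hg_C2 isOpen_Ioi hx
  have hzero : EqOn (f - g) 0 (Ici a) := by
    refine eqOn_zero_of_inner_deriv2_nonneg_of_bounded (hf_cont.sub hg_cont)
      (fun x hx ↦ (hf_deriv x hx).1.sub (hg_deriv x hx).1)
      (fun x hx ↦ (hf_deriv x hx).2.sub (hg_deriv x hx).2)
      (fun x hx ↦ ?_) hbdd (sub_eq_zero.2 ha)
    rw [hf_ode x hx, hg_ode x hx]
    exact hF x hx (f x) (g x)
  exact fun x hx ↦ sub_eq_zero.1 (hzero hx)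

end InnerProductSpace

/-- the normalized Airy function `u` (restricted to `[0,∞)`) is the unique
bounded solution of the boundary value problem `f'' = 2h·f`, `f 0 = 1`. -/
theorem stmt1
    (u : ℝ → ℝ) (hu_smooth : ContDiff ℝ 2 u)
    (hu_ode : ∀ h : ℝ, deriv (deriv u) h = 2 * h * u h)
    (hu_zero : u 0 = 1)
    (hu'_zero : deriv u 0 = -((6:ℝ) ^ ((1:ℝ)/3) * Real.Gamma (2/3) / Real.Gamma (1/3)))
    (hu_pos : ∀ h : ℝ, 0 ≤ h → 0 < u h)
    (hu_anti : StrictAntiOn u (Ici 0))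
    (hu_lim : Tendsto u atTop (𝓝 0))
    (f : ℝ → ℝ)
    (hf_cont : ContinuousOn f (Ici 0))
    (hf_C2 : ContDiffOn ℝ 2 f (Ioi 0))
    (hf_bdd : ∃ M : ℝ, ∀ h : ℝ, 0 ≤ h → |f h| ≤ M)
    (hf_ode : ∀ h : ℝ, 0 < h → deriv (deriv f) h = 2 * h * f h)
    (hf_zero : f 0 = 1) :
    ∀ h : ℝ, 0 ≤ h → f h = u h := by
  have hu_bdd {h : ℝ} (hh : 0 ≤ h) : ‖u h‖ ≤ u 0 :=
    norm_le_of_antitoneOn_of_nonneg hu_anti.antitoneOn hh (hu_pos h hh).le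
  have hbdd : ∃ M, ∀ h ∈ Ici (0 : ℝ), ‖f h - u h‖ ≤ M :=
    hf_bdd.imp' (· + u 0) fun M hM h hh ↦ norm_sub_le_of_le (hM h hh) (hu_bdd hh)
  have hmono {h : ℝ} (hh : 0 < h) : Monotone (2 * h * ·) := monotone_id.const_mul (by positivity)
  exact stmt1_general (fun h hh ↦ inner_sub_sub_nonneg_of_monotone (hmono hh)) hf_cont hf_C2 hf_ode
    hu_smooth.continuous.continuousOn hu_smooth.contDiffOn (fun h _ ↦ hu_ode h) hbdd
    (hf_zero.trans hu_zero.symm)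
end
end

section
/- Let u be the normalized Airy function. If ν : [0,∞) → ℝ is twice continuously differentiable, satisfies (u(h)²·(u(h)^{-2}·ν(h))')' = -4·u(h)² for all h > 0, is Lebesgue integrable on [0,∞), and ∫₀^∞ ν(h) dh = 1, then ν(h) = -2·u(h)·u'(h) for all h ≥ 0. (Thus the density of the height H(θ₁) of the true self-repelling motion at an independent exponential time, which satisfies these conditions, equals -2uu' = -(u²)'.) -/
open Real MeasureTheory Set Filter Topology

noncomputable section

/-! Let `u` be a positive decreasing solution of `u'' = V u` on `(0, ∞)`. The function `-2uu'`
solves `(u²(u⁻²ν)')' = -2V'u²`, so for any other solution `ν` the difference `w = ν + 2uu'` has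
constant flux `u²(u⁻²w)' = C`, that is, `w = c u² + C u² ∫ u⁻²`. If `V` grows at most
quadratically, then `u'/u` grows at most linearly; hence `u² ∫ u⁻²` is bounded below by a multiple
of `1/x` and is not integrable, which forces `C = 0`. Prescribing the integral of `ν` then forces
`c = 0`. The Airy equation is the case `V(h) = 2h`. -/

open Asymptotics

theorem hasDerivAt_of_deriv_eq_of_ne_zero {𝕜 F : Type*} [NontriviallyNormedField 𝕜]
    [NormedAddCommGroup F] [NormedSpace 𝕜 F] {f : 𝕜 → F} {f' : F} {x : 𝕜} (hf : deriv f x = f')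
    (hf' : f' ≠ 0) : HasDerivAt f f' x :=
  hf ▸ (differentiableAt_of_deriv_ne_zero (hf ▸ hf')).hasDerivAt

theorem tendsto_atTop_of_hasDerivAt_of_le {f f' : ℝ → ℝ} {m : ℝ} (hm : 0 < m)
    (hf : ∀ᶠ x in atTop, HasDerivAt f (f' x) x) (hf' : ∀ᶠ x in atTop, m ≤ f' x) :
    Tendsto f atTop atTop := by
  obtain ⟨a, ha⟩ := eventually_atTop.1 (hf.and hf')
  have hline : Tendsto (fun x ↦ m * (x - a) + f a) atTop atTop :=
    tendsto_atTop_add_const_right _ _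
      ((tendsto_atTop_add_const_right _ (-a) tendsto_id).const_mul_atTop hm)
  refine tendsto_atTop_mono' _ ?_ hline
  filter_upwards [eventually_ge_atTop a] with x hx
  have hmean : m * (x - a) ≤ f x - f a :=
    (convex_Ici a).mul_sub_le_image_sub_of_le_deriv
      (fun y hy ↦ (ha y hy).1.continuousAt.continuousWithinAt)
      (fun y hy ↦ (ha y (interior_subset hy)).1.differentiableAt.differentiableWithinAt)
      (fun y hy ↦ (ha y (interior_subset hy)).1.deriv ▸ (ha y (interior_subset hy)).2)
      a self_mem_Ici x hx hx
  linarith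

theorem nonpos_of_hasDerivAt_of_antitoneOn {f : ℝ → ℝ} {f' x : ℝ} {s : Set ℝ} (hs : s ∈ 𝓝 x)
    (hd : HasDerivAt f f' x) (hf : AntitoneOn f s) : f' ≤ 0 := by
  rw [← hd.deriv, ← derivWithin_of_mem_nhds hs]
  exact hf.derivWithin_nonpos

theorem neg_deriv_le_div_add_mul {f f' f'' : ℝ → ℝ} {a δ M : ℝ} (hδ : 0 < δ) (hM : 0 ≤ M)
    (hf : ∀ x ∈ Icc a (a + δ), HasDerivAt f (f' x) x)
    (hf' : ∀ x ∈ Icc a (a + δ), HasDerivAt f' (f'' x) x)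
    (hf'' : ∀ x ∈ Icc a (a + δ), f'' x ≤ M) (hnonneg : 0 ≤ f (a + δ)) :
    -f' a ≤ f a / δ + M * δ := by
  obtain ⟨η, hη, hslope⟩ := exists_hasDerivAt_eq_slope f f' (lt_add_of_pos_right a hδ)
    (fun x hx ↦ (hf x hx).continuousAt.continuousWithinAt)
    (fun x hx ↦ hf x (Ioo_subset_Icc_self hx))
  have hsub : Icc a η ⊆ Icc a (a + δ) := Icc_subset_Icc_right hη.2.le
  obtain ⟨ξ, hξ, hslope'⟩ := exists_hasDerivAt_eq_slope f' f'' hη.1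
    (fun x hx ↦ (hf' x (hsub hx)).continuousAt.continuousWithinAt)
    (fun x hx ↦ hf' x (hsub (Ioo_subset_Icc_self hx)))
  have hη_lower : -(f a / δ) ≤ f' η := by
    rw [hslope, add_sub_cancel_left, ← neg_div]
    gcongr
    linarith
  have hη_upper : f' η - f' a ≤ M * δ := by
    have hηa : 0 < η - a := sub_pos.2 hη.1
    calc f' η - f' a = f'' ξ * (η - a) := by rw [hslope', div_mul_cancel₀ _ hηa.ne']
      _ ≤ M * (η - a) := by
          gcongr
          exact hf'' ξ (hsub (Ioo_subset_Icc_self hξ))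
      _ ≤ M * δ := by
          gcongr
          linarith [hη.2]
  linarith

theorem not_integrableOn_Ioi_of_inv_isBigO {f : ℝ → ℝ} (a : ℝ)
    (hf : (fun x : ℝ ↦ x⁻¹) =O[atTop] f) : ¬IntegrableOn f (Ioi a) := by
  refine not_integrableOn_of_tendsto_norm_atTop_of_deriv_isBigO_filter (f := log) atTop
    (Ioi_mem_atTop a) ?_ (tendsto_norm_atTop_atTop.comp tendsto_log_atTop) ?_
  · filter_upwards [eventually_ne_atTop 0] with x hx
    exact differentiableAt_log hx
  · rwa [deriv_log']

theorem eq_zero_of_setIntegral_const_mul_eq_zero {α : Type*} [MeasurableSpace α] {μ : Measure α}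
    {s : Set α} {f : α → ℝ} {c : ℝ} (hs : MeasurableSet s) (hμs : μ s ≠ 0)
    (hf : ∀ x ∈ s, 0 < f x) (hint : IntegrableOn (fun x ↦ c * f x) s μ)
    (hzero : ∫ x in s, c * f x ∂μ = 0) : c = 0 := by
  by_contra hc
  have hf_int : IntegrableOn f s μ :=
    (integrable_const_mul_iff (isUnit_iff_ne_zero.2 hc) f).1 hint
  have hpos : 0 < ∫ x in s, f x ∂μ := by
    rw [setIntegral_pos_iff_support_of_nonneg_ae
      ((ae_restrict_iff' hs).2 (ae_of_all _ fun x hx ↦ (hf x hx).le)) hf_int,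
      inter_eq_right.2 fun x hx ↦ Function.mem_support.2 (hf x hx).ne']
    exact pos_iff_ne_zero.2 hμs
  rw [integral_const_mul] at hzero
  exact mul_ne_zero hc hpos.ne' hzero

/-- The flux `u² (u⁻² w)'` of `w` relative to `u`; the equation for the density `ν` prescribes the
derivative of `flux u ν`. -/
def flux (u w : ℝ → ℝ) (x : ℝ) : ℝ :=
  u x ^ 2 * deriv (fun y ↦ w y / u y ^ 2) x

section Flux

variable {u w : ℝ → ℝ} {x : ℝ}

theorem hasDerivAt_div_sq (hw : DifferentiableAt ℝ w x) (hu : DifferentiableAt ℝ u x)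
    (hux : u x ≠ 0) : HasDerivAt (fun y ↦ w y / u y ^ 2) (flux u w x / u x ^ 2) x := by
  have hu2 : u x ^ 2 ≠ 0 := pow_ne_zero 2 hux
  rw [flux, mul_div_cancel_left₀ _ hu2]
  exact (hw.div (hu.pow 2) hu2).hasDerivAt

theorem flux_add_const_mul {v : ℝ → ℝ} (c : ℝ) (hw : DifferentiableAt ℝ w x)
    (hv : DifferentiableAt ℝ v x) (hu : DifferentiableAt ℝ u x) (hux : u x ≠ 0) :
    flux u (fun y ↦ w y + c * v y) x = flux u w x + c * flux u v x := by
  have hderiv := (hasDerivAt_div_sq hw hu hux).fun_add ((hasDerivAt_div_sq hv hu hux).const_mul c)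
  have hsplit : (fun y ↦ (w y + c * v y) / u y ^ 2) =
      fun y ↦ w y / u y ^ 2 + c * (v y / u y ^ 2) := by
    funext y
    ring
  rw [flux, hsplit, hderiv.deriv]
  field_simp

theorem flux_mul_deriv {u' : ℝ → ℝ} {u'' : ℝ} (hu : HasDerivAt u (u' x) x)
    (hu' : HasDerivAt u' u'' x) (hux : u x ≠ 0) :
    flux u (fun y ↦ u y * u' y) x = u x * u'' - u' x ^ 2 := by
  have hquot : (fun y ↦ u y * u' y / u y ^ 2) = fun y ↦ u' y / u y := by
    funext y
    rcases eq_or_ne (u y) 0 with hy | hy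
    · simp [hy]
    · field_simp
  rw [flux, hquot, (hu'.fun_div hu hux).deriv]
  field_simp

end Flux

section Schrodinger

variable {V u u' : ℝ → ℝ}

theorem hasDerivAt_flux_mul_deriv {V' x : ℝ} (hV : HasDerivAt V V' x)
    (hu : ∀ᶠ y in 𝓝 x, HasDerivAt u (u' y) y)
    (hu' : ∀ᶠ y in 𝓝 x, HasDerivAt u' (V y * u y) y) (hux : u x ≠ 0) :
    HasDerivAt (flux u fun y ↦ u y * u' y) (V' * u x ^ 2) x := by
  have hux' := hu.self_of_nhds
  have hflux : flux u (fun y ↦ u y * u' y) =ᶠ[𝓝 x] fun y ↦ u y * (V y * u y) - u' y ^ 2 := by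
    filter_upwards [hu, hu', hux'.continuousAt.eventually_ne hux] with y hy hy' hy0
    exact flux_mul_deriv hy hy' hy0
  refine HasDerivAt.congr_of_eventuallyEq ?_ hflux
  refine ((hux'.mul (hV.mul hux')).sub (hu'.self_of_nhds.pow 2)).congr_deriv ?_
  simp only [Pi.mul_apply]
  ring

theorem isBigO_deriv_of_isBigO_sq (hV : V =O[atTop] (· ^ 2))
    (hu : ∀ x > 0, HasDerivAt u (u' x) x) (hu' : ∀ x > 0, HasDerivAt u' (V x * u x) x)
    (hpos : ∀ x > 0, 0 < u x) (hanti : AntitoneOn u (Ioi 0)) :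
    u' =O[atTop] fun x ↦ x * u x := by
  obtain ⟨K, hK, hVK⟩ := hV.exists_pos
  obtain ⟨a, ha⟩ := eventually_atTop.1 hVK.bound
  refine IsBigO.of_bound (1 + 4 * K) ?_
  filter_upwards [eventually_ge_atTop a, eventually_ge_atTop 1] with x hax hx1
  have hx : 0 < x := by linarith
  have hux := hpos x hx
  have hinv : x⁻¹ ≤ x := (inv_le_one_of_one_le₀ hx1).trans hx1
  have hu'' : ∀ y ∈ Icc x (x + x⁻¹), V y * u y ≤ 4 * K * x ^ 2 * u x := fun y hy ↦ by
    have hy0 : 0 < y := hx.trans_le hy.1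
    have hVy : V y ≤ 4 * K * x ^ 2 := calc
      V y ≤ K * ‖y ^ 2‖ := (le_norm_self _).trans (ha y (hax.trans hy.1))
      _ = K * y ^ 2 := by rw [norm_of_nonneg (sq_nonneg y)]
      _ ≤ K * (2 * x) ^ 2 := by
          gcongr
          linarith [hy.2]
      _ = 4 * K * x ^ 2 := by ring
    exact mul_le_mul hVy (hanti hx hy0 hy.1) (hpos y hy0).le (by positivity)
  -- The step `δ = 1 / x` balances the two terms `u / δ` and `x² u δ`.
  have hlower : -u' x ≤ u x / x⁻¹ + 4 * K * x ^ 2 * u x * x⁻¹ :=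
    neg_deriv_le_div_add_mul (inv_pos.2 hx) (by positivity)
      (fun y hy ↦ hu y (hx.trans_le hy.1)) (fun y hy ↦ hu' y (hx.trans_le hy.1)) hu''
      (hpos _ (by positivity)).le
  have hnonpos : u' x ≤ 0 :=
    nonpos_of_hasDerivAt_of_antitoneOn (Ioi_mem_nhds hx) (hu x hx) hanti
  rw [norm_of_nonpos hnonpos, norm_of_nonneg (by positivity)]
  refine hlower.trans_eq ?_
  field_simp

theorem hasDerivAt_inv_sq_mul {x : ℝ} (hu : HasDerivAt u (u' x) x) (hx : x ≠ 0) (hux : u x ≠ 0) :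
    HasDerivAt (fun y ↦ (u y ^ 2 * y)⁻¹)
      (-((u x ^ 2)⁻¹ * (2 * (u' x / (x * u x)) + (x ^ 2)⁻¹))) x := by
  refine (((hu.pow 2).mul (hasDerivAt_id x)).inv
    (mul_ne_zero (pow_ne_zero 2 hux) hx)).congr_deriv ?_
  simp only [Pi.mul_apply, Pi.pow_apply, id]
  field_simp
  ring

-- For small `c` the derivative of `c / (u² x)` is at most `g' / 2`, so half of `g'` survives.
theorem exists_tendsto_sub_inv_sq_mul_atTop {g : ℝ → ℝ} (hu : ∀ x > 0, HasDerivAt u (u' x) x)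
    (hg : ∀ x > 0, HasDerivAt g (u x ^ 2)⁻¹ x) (hpos : ∀ x > 0, 0 < u x)
    (hanti : AntitoneOn u (Ioi 0)) (hu' : u' =O[atTop] fun x ↦ x * u x) :
    ∃ c > 0, Tendsto (fun x ↦ g x - c * (u x ^ 2 * x)⁻¹) atTop atTop := by
  obtain ⟨K, hK, hbound⟩ := hu'.exists_pos
  refine ⟨(4 * K)⁻¹, by positivity,
    tendsto_atTop_of_hasDerivAt_of_le (m := (u 1 ^ 2)⁻¹ * 2⁻¹) ?_
      ((eventually_gt_atTop 0).mono fun x hx ↦ (hg x hx).sub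
        ((hasDerivAt_inv_sq_mul (hu x hx) hx.ne' (hpos x hx).ne').const_mul (4 * K)⁻¹)) ?_⟩
  · have hu1 := hpos 1 one_pos
    positivity
  filter_upwards [hbound.bound, eventually_ge_atTop 1] with x hbx hx1
  have hx : 0 < x := by linarith
  have hux := hpos x hx
  have hratio : -K ≤ u' x / (x * u x) := by
    rw [le_div_iff₀ (by positivity), neg_mul, neg_le]
    rw [norm_of_nonneg (by positivity : 0 ≤ x * u x)] at hbx
    exact (neg_le_abs _).trans hbx
  have hle : u x ≤ u 1 := hanti (mem_Ioi.2 one_pos) hx hx1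
  calc (u 1 ^ 2)⁻¹ * 2⁻¹ ≤ (u x ^ 2)⁻¹ * 2⁻¹ := by gcongr
    _ = (u x ^ 2)⁻¹ * (1 + (4 * K)⁻¹ * (2 * -K + 0)) := by
        field_simp
        ring
    _ ≤ (u x ^ 2)⁻¹ * (1 + (4 * K)⁻¹ * (2 * (u' x / (x * u x)) + (x ^ 2)⁻¹)) := by
        gcongr
        positivity
    _ = _ := by ring

theorem inv_isBigO_sq_mul {g : ℝ → ℝ} (hu : ∀ x > 0, HasDerivAt u (u' x) x)
    (hg : ∀ x > 0, HasDerivAt g (u x ^ 2)⁻¹ x) (hpos : ∀ x > 0, 0 < u x)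
    (hanti : AntitoneOn u (Ioi 0)) (hu' : u' =O[atTop] fun x ↦ x * u x) :
    (fun x : ℝ ↦ x⁻¹) =O[atTop] fun x ↦ u x ^ 2 * g x := by
  obtain ⟨c, hc, hlim⟩ := exists_tendsto_sub_inv_sq_mul_atTop hu hg hpos hanti hu'
  refine IsBigO.of_bound c⁻¹ ?_
  filter_upwards [hlim.eventually_ge_atTop 0, eventually_gt_atTop 0] with x hgx hx
  have hux := hpos x hx
  rw [norm_of_nonneg (by positivity)]
  calc x⁻¹ = c⁻¹ * (u x ^ 2 * (c * (u x ^ 2 * x)⁻¹)) := by field_simp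
    _ ≤ c⁻¹ * (u x ^ 2 * g x) := by
        gcongr
        exact sub_nonneg.1 hgx
    _ ≤ c⁻¹ * ‖u x ^ 2 * g x‖ := by
        gcongr
        exact le_norm_self _

theorem eq_zero_of_flux_eq_of_integrableOn {w : ℝ → ℝ} {C : ℝ}
    (hu : ∀ x > 0, HasDerivAt u (u' x) x) (hpos : ∀ x > 0, 0 < u x)
    (hanti : AntitoneOn u (Ioi 0)) (hu' : u' =O[atTop] fun x ↦ x * u x)
    (hw : ∀ x > 0, DifferentiableAt ℝ w x) (hflux : ∀ x > 0, flux u w x = C)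
    (hint : IntegrableOn w (Ioi 0)) : C = 0 := by
  by_contra hC
  have hderiv : ∀ x > 0, HasDerivAt (fun y ↦ C⁻¹ * (w y / u y ^ 2)) (u x ^ 2)⁻¹ x := by
    intro x hx
    refine ((hasDerivAt_div_sq (hw x hx) (hu x hx).differentiableAt
      (hpos x hx).ne').const_mul C⁻¹).congr_deriv ?_
    rw [hflux x hx]
    field_simp
  refine not_integrableOn_Ioi_of_inv_isBigO 0 (inv_isBigO_sq_mul hu hderiv hpos hanti hu') ?_
  refine IntegrableOn.congr_fun (hint.const_mul C⁻¹) (fun x hx ↦ ?_) measurableSet_Ioi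
  have hux := (hpos x hx).ne'
  field_simp

theorem eqOn_zero_of_hasDerivAt_flux_zero {w : ℝ → ℝ}
    (hu : ∀ x > 0, HasDerivAt u (u' x) x) (hpos : ∀ x > 0, 0 < u x)
    (hanti : AntitoneOn u (Ioi 0)) (hu' : u' =O[atTop] fun x ↦ x * u x)
    (hw : ∀ x > 0, DifferentiableAt ℝ w x) (hflux : ∀ x > 0, HasDerivAt (flux u w) 0 x)
    (hint : IntegrableOn w (Ioi 0)) (hzero : ∫ x in Ioi 0, w x = 0) :
    EqOn w 0 (Ioi 0) := by
  obtain ⟨C, hC⟩ := isOpen_Ioi.exists_is_const_of_deriv_eq_zero isPreconnected_Ioi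
    (fun x hx ↦ (hflux x hx).differentiableAt.differentiableWithinAt)
    (fun x hx ↦ (hflux x hx).deriv)
  have hC0 : C = 0 := eq_zero_of_flux_eq_of_integrableOn hu hpos hanti hu' hw hC hint
  have hquot : ∀ x > 0, HasDerivAt (fun y ↦ w y / u y ^ 2) 0 x := by
    intro x hx
    refine (hasDerivAt_div_sq (hw x hx) (hu x hx).differentiableAt (hpos x hx).ne').congr_deriv ?_
    rw [hC x hx, hC0, zero_div]
  obtain ⟨c, hc⟩ := isOpen_Ioi.exists_is_const_of_deriv_eq_zero isPreconnected_Ioi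
    (fun x hx ↦ (hquot x hx).differentiableAt.differentiableWithinAt)
    (fun x hx ↦ (hquot x hx).deriv)
  have hwc : EqOn w (fun x ↦ c * u x ^ 2) (Ioi 0) := fun x hx ↦
    (div_eq_iff (pow_ne_zero 2 (hpos x hx).ne')).1 (hc x hx)
  have hc0 : c = 0 := eq_zero_of_setIntegral_const_mul_eq_zero measurableSet_Ioi (by simp)
    (fun x hx ↦ pow_pos (hpos x hx) 2) (hint.congr_fun hwc measurableSet_Ioi)
    ((setIntegral_congr_fun measurableSet_Ioi hwc).symm.trans hzero)
  intro x hx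
  simp [hwc hx, hc0]

end Schrodinger

theorem integrableOn_and_integral_mul_deriv {u u' : ℝ → ℝ} {a l : ℝ}
    (hcont : ContinuousWithinAt u (Ici a) a) (hu : ∀ x > a, HasDerivAt u (u' x) x)
    (hpos : ∀ x > a, 0 < u x) (hanti : AntitoneOn u (Ioi a)) (hlim : Tendsto u atTop (𝓝 l)) :
    IntegrableOn (fun x ↦ 2 * (u x * u' x)) (Ioi a) ∧
      ∫ x in Ioi a, 2 * (u x * u' x) = l ^ 2 - u a ^ 2 := by
  have hderiv : ∀ x ∈ Ioi a, HasDerivAt (fun y ↦ u y ^ 2) (2 * (u x * u' x)) x := fun x hx ↦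
    ((hu x hx).fun_pow 2).congr_deriv (by ring)
  have hnonpos : ∀ x ∈ Ioi a, 2 * (u x * u' x) ≤ 0 := fun x hx ↦
    mul_nonpos_of_nonneg_of_nonpos zero_le_two (mul_nonpos_of_nonneg_of_nonpos (hpos x hx).le
      (nonpos_of_hasDerivAt_of_antitoneOn (Ioi_mem_nhds hx) (hu x hx) hanti))
  exact ⟨integrableOn_Ioi_deriv_of_nonpos (hcont.pow 2) hderiv hnonpos (hlim.pow 2),
    integral_Ioi_of_hasDerivAt_of_nonpos (hcont.pow 2) hderiv hnonpos (hlim.pow 2)⟩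

theorem stmt5_general {V V' u u' ν : ℝ → ℝ} {l : ℝ} (hV : ∀ x > 0, HasDerivAt V (V' x) x)
    (hV_growth : V =O[atTop] (· ^ 2))
    (huc : ContinuousOn u (Ici 0)) (hu'c : ContinuousOn u' (Ici 0))
    (hu : ∀ x > 0, HasDerivAt u (u' x) x) (hu' : ∀ x > 0, HasDerivAt u' (V x * u x) x)
    (hpos : ∀ x > 0, 0 < u x) (hanti : AntitoneOn u (Ioi 0)) (hlim : Tendsto u atTop (𝓝 l))
    (hνc : ContinuousOn ν (Ici 0)) (hν : ∀ x > 0, DifferentiableAt ℝ ν x)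
    (hν_flux : ∀ x > 0, HasDerivAt (flux u ν) (-2 * V' x * u x ^ 2) x)
    (hν_int : IntegrableOn ν (Ici 0)) (hν_integral : ∫ x in Ici 0, ν x = u 0 ^ 2 - l ^ 2) :
    ∀ x ≥ 0, ν x = -2 * u x * u' x := by
  rw [integrableOn_Ici_iff_integrableOn_Ioi] at hν_int
  rw [integral_Ici_eq_integral_Ioi] at hν_integral
  obtain ⟨huu'_int, huu'_integral⟩ :=
    integrableOn_and_integral_mul_deriv (huc 0 self_mem_Ici) hu hpos hanti hlim
  have huu' : ∀ x > 0, DifferentiableAt ℝ (fun y ↦ u y * u' y) x := fun x hx ↦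
    (hu x hx).differentiableAt.mul (hu' x hx).differentiableAt
  have hflux : ∀ x > 0, HasDerivAt (flux u fun y ↦ ν y + 2 * (u y * u' y)) 0 x := by
    intro x hx
    have hnear : ∀ᶠ y in 𝓝 x, 0 < y := Ioi_mem_nhds hx
    have hsum := (hν_flux x hx).fun_add ((hasDerivAt_flux_mul_deriv (hV x hx) (hnear.mono hu)
      (hnear.mono hu') (hpos x hx).ne').const_mul 2)
    refine (hsum.congr_deriv (by ring)).congr_of_eventuallyEq ?_
    filter_upwards [hnear] with y hy
    exact flux_add_const_mul 2 (hν y hy) (huu' y hy) (hu y hy).differentiableAt (hpos y hy).ne'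
  have hzero : EqOn (fun x ↦ ν x + 2 * (u x * u' x)) 0 (Ioi 0) :=
    eqOn_zero_of_hasDerivAt_flux_zero hu hpos hanti
      (isBigO_deriv_of_isBigO_sq hV_growth hu hu' hpos hanti)
      (fun x hx ↦ (hν x hx).add ((huu' x hx).const_mul 2)) hflux (hν_int.add huu'_int)
      (by rw [integral_add hν_int huu'_int, hν_integral, huu'_integral]; ring)
  have hzero_Ici : EqOn (fun x ↦ ν x + 2 * (u x * u' x)) 0 (Ici 0) :=
    hzero.of_subset_closure (hνc.add ((huc.mul hu'c).const_mul 2)) continuousOn_const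
      Ioi_subset_Ici_self (closure_Ioi (0 : ℝ)).ge
  intro x hx
  have hx0 : ν x + 2 * (u x * u' x) = 0 := hzero_Ici hx
  linarith

/-- the unique integrable solution of `(u²·(u⁻²·ν)')' = -4u²` on `[0,∞)`
with total integral `1` is `ν = -2·u·u' = -(u²)'`, where `u` is the normalized Airy
function.  (This is the density of the height `H(θ₁)` of the TSRM at an independent
exponential time.) -/
theorem stmt5
    (u : ℝ → ℝ) (hu_smooth : ContDiff ℝ 2 u)
    (hu_ode : ∀ h : ℝ, deriv (deriv u) h = 2 * h * u h)
    (hu_zero : u 0 = 1)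
    (hu'_zero : deriv u 0 = -((6:ℝ) ^ ((1:ℝ)/3) * Real.Gamma (2/3) / Real.Gamma (1/3)))
    (hu_pos : ∀ h : ℝ, 0 ≤ h → 0 < u h)
    (hu_anti : StrictAntiOn u (Ici 0))
    (hu_lim : Tendsto u atTop (𝓝 0))
    (ν : ℝ → ℝ)
    (hν1 : ∀ h : ℝ, 0 ≤ h → DifferentiableAt ℝ ν h)
    (hν2 : ∀ h : ℝ, 0 ≤ h → DifferentiableAt ℝ (deriv ν) h)
    (hν2c : ContinuousOn (deriv (deriv ν)) (Ici 0))
    (hν_ode : ∀ h : ℝ, 0 < h →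
      deriv (fun y => (u y) ^ 2 * deriv (fun x => ν x / (u x) ^ 2) y) h = -4 * (u h) ^ 2)
    (hν_int : IntegrableOn ν (Ici 0))
    (hν_one : (∫ h in Ici (0:ℝ), ν h) = 1) :
    ∀ h : ℝ, 0 ≤ h → ν h = -2 * u h * deriv u h := by
  have hu : Differentiable ℝ u := hu_smooth.differentiable two_ne_zero
  have hu' : Differentiable ℝ (deriv u) := hu_smooth.differentiable_deriv_two
  have hV_growth : (fun h : ℝ ↦ 2 * h) =O[atTop] (· ^ 2) := by
    simpa only [pow_one] using
      (isLittleO_pow_pow_atTop_of_lt (𝕜 := ℝ) one_lt_two).isBigO.const_mul_left 2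
  have hν_flux : ∀ h > 0, HasDerivAt (flux u ν) (-2 * 2 * u h ^ 2) h := fun h hh ↦
    hasDerivAt_of_deriv_eq_of_ne_zero ((hν_ode h hh).trans (by ring))
      (mul_ne_zero (by norm_num) (pow_ne_zero 2 (hu_pos h hh.le).ne'))
  exact stmt5_general (fun h _ ↦ hasDerivAt_const_mul 2) hV_growth
    hu.continuous.continuousOn hu'.continuous.continuousOn
    (fun h _ ↦ (hu h).hasDerivAt) (fun h _ ↦ hu_ode h ▸ (hu' h).hasDerivAt)
    (fun h hh ↦ hu_pos h hh.le) (hu_anti.antitoneOn.mono Ioi_subset_Ici_self) hu_lim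
    (fun h hh ↦ (hν1 h hh).continuousAt.continuousWithinAt) (fun h hh ↦ hν1 h hh.le)
    hν_flux hν_int (by rw [hν_one, hu_zero]; norm_num)
end
end

section
/- Let u be the normalized Airy function and let ν₂(h) := (2·6^{1/3}·√π/Γ(1/3)²)·e^{-8h³/9}·U(1/6, 2/3; 8h³/9) for h ≥ 0. Then for every h ≥ 0: ∫₀^∞ e^{-t}·t^{-1/3}·ν₂(t^{-1/3}·h) dt = -2·u(h)·u'(h). (This identity expresses that ν₂ is the density of the height H(1) of the true self-repelling motion at time 1, whose mixture over an exponential time has density -(u²)'.) -/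
open Real MeasureTheory Set Filter Topology

noncomputable section

/-- Confluent hypergeometric function of the second kind (Tricomi function),
via its integral representation. -/
def tricomiU (a b z : ℝ) : ℝ :=
  (1 / Real.Gamma a) * ∫ s in Ioi (0:ℝ), Real.exp (-z * s) * s ^ (a - 1) * (1 + s) ^ (b - a - 1)

/-- The density of the height `H(1)` of the TSRM at time `1`. -/
def nu2 (h : ℝ) : ℝ :=
  (2 * (6:ℝ) ^ ((1:ℝ)/3) * Real.sqrt π / (Real.Gamma (1/3)) ^ 2) *
    Real.exp (-8 * h ^ 3 / 9) * tricomiU (1/6) (2/3) (8 * h ^ 3 / 9)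

/-! With `x = 2 h³ / 9` the functions `Γ_x(1/3)` and `-6^(1/3) Γ_x(2/3)` (see `extGamma`) of `h`
satisfy the first-order system of the Airy equation, because `d/dx Γ_x(s) = -Γ_x(s - 1)` and
`Γ_x(s) = x^s Γ_x(-s)`; hence `u u'` is a constant times `Γ_x(1/3) Γ_x(2/3)`. Nicholson's formula
for products of Macdonald functions turns this product into the integral over `θ` of a power of
`cosh θ` times a single extended gamma function at `4 x cosh² θ`, which is itself an exponential
mixture over `t` of `exp (-(4 x / t) cosh² θ)`. Integrating over `θ` first and substituting
`s = sinh² θ` gives the function `U(1/2, 4/3; 4 x / t)`, and Kummer's transformation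
`U(a, b; z) = z^(1 - b) U(a - b + 1, 2 - b; z)` identifies it with the one in `ν₂`. -/

section Integrals

variable {α β : Type*} [MeasurableSpace α] [MeasurableSpace β] {μ : Measure α} {ν : Measure β}
  [SFinite μ] [SFinite ν]

-- If the product integral diverges then so do both iterated integrals, and all of them are `0`.
theorem setIntegral_setIntegral_swap_of_nonneg {s : Set α} {t : Set β} {f : α → β → ℝ}
    (hs : MeasurableSet s) (ht : MeasurableSet t)
    (hf : AEStronglyMeasurable (Function.uncurry f) ((μ.restrict s).prod (ν.restrict t)))
    (hf0 : ∀ x ∈ s, ∀ y ∈ t, 0 ≤ f x y)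
    (hx : ∀ x ∈ s, IntegrableOn (f x) t ν) (hy : ∀ y ∈ t, IntegrableOn (fun x => f x y) s μ) :
    ∫ x in s, ∫ y in t, f x y ∂ν ∂μ = ∫ y in t, ∫ x in s, f x y ∂μ ∂ν := by
  by_cases hfi : Integrable (Function.uncurry f) ((μ.restrict s).prod (ν.restrict t))
  · exact integral_integral_swap hfi
  rw [integral_undef, integral_undef]
  · intro h
    refine hfi ((integrable_prod_iff' hf).2 ⟨ae_restrict_of_forall_mem ht hy, ?_⟩)
    refine h.congr (ae_restrict_of_forall_mem ht fun y hyt => ?_)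
    exact setIntegral_congr_fun hs fun x hxs => (norm_of_nonneg (hf0 x hxs y hyt)).symm
  · intro h
    refine hfi ((integrable_prod_iff hf).2 ⟨ae_restrict_of_forall_mem hs hx, ?_⟩)
    refine h.congr (ae_restrict_of_forall_mem hs fun x hxs => ?_)
    exact setIntegral_congr_fun ht fun y hyt => (norm_of_nonneg (hf0 x hxs y hyt)).symm

variable {E : Type*} [NormedAddCommGroup E] [NormedSpace ℝ E]

theorem integral_comp_exp (g : ℝ → E) : ∫ x, exp x • g (exp x) = ∫ y in Ioi 0, g y := by
  have h := integral_image_eq_integral_abs_deriv_smul MeasurableSet.univ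
    (fun x _ => (hasDerivAt_exp x).hasDerivWithinAt) exp_injective.injOn g
  simpa only [image_univ, range_exp, Measure.restrict_univ, abs_exp] using h.symm

theorem image_sinh_sq_Ioi_zero : (fun x => sinh x ^ 2) '' Ioi 0 = Ioi 0 := by
  refine Subset.antisymm ?_ fun y hy => ⟨arsinh √y, ?_, ?_⟩
  · rintro _ ⟨x, hx, rfl⟩
    exact pow_pos (sinh_pos_iff.2 hx) 2
  · exact arsinh_pos_iff.2 (sqrt_pos.2 hy)
  · simp only [sinh_arsinh, sq_sqrt (mem_Ioi.1 hy).le]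

theorem integral_comp_sinh_sq_Ioi (g : ℝ → E) :
    ∫ x in Ioi 0, (2 * sinh x * cosh x) • g (sinh x ^ 2) = ∫ y in Ioi 0, g y := by
  have hderiv (x : ℝ) : HasDerivAt (fun x => sinh x ^ 2) (2 * sinh x * cosh x) x := by
    simpa using (hasDerivAt_sinh x).fun_pow 2
  have hmono : MonotoneOn (fun x => sinh x ^ 2) (Ioi 0) := fun x hx y _ hxy =>
    pow_le_pow_left₀ (sinh_nonneg_iff.2 (mem_Ioi.1 hx).le) (sinh_le_sinh.2 hxy) 2
  rw [← integral_image_eq_integral_deriv_smul_of_monotoneOn measurableSet_Ioi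
    (fun x _ => (hderiv x).hasDerivWithinAt) hmono, image_sinh_sq_Ioi_zero]

end Integrals

section LinearODE

theorem eq_left_of_hasDerivAt_zero {f : ℝ → ℝ} {a x : ℝ} (hf : ContinuousOn f (Ici a))
    (hf' : ∀ y ∈ Ioi a, HasDerivAt f 0 y) (hx : a ≤ x) : f x = f a := by
  rcases hx.eq_or_lt with rfl | hx
  · rfl
  obtain ⟨c, -, hc⟩ := exists_hasDerivAt_eq_slope f (fun _ => 0) hx
    (hf.mono Icc_subset_Ici_self) fun y hy => hf' y hy.1
  exact sub_eq_zero.1 ((div_eq_zero_iff.1 hc.symm).resolve_right (sub_pos.2 hx).ne')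

variable {q y z y' z' : ℝ → ℝ} {a x : ℝ}

theorem wronskian_eq_left (hyc : ContinuousOn y (Ici a)) (hy'c : ContinuousOn y' (Ici a))
    (hzc : ContinuousOn z (Ici a)) (hz'c : ContinuousOn z' (Ici a))
    (hy : ∀ t ∈ Ioi a, HasDerivAt y (y' t) t) (hy' : ∀ t ∈ Ioi a, HasDerivAt y' (q t * y t) t)
    (hz : ∀ t ∈ Ioi a, HasDerivAt z (z' t) t) (hz' : ∀ t ∈ Ioi a, HasDerivAt z' (q t * z t) t)
    (hx : a ≤ x) : y' x * z x - y x * z' x = y' a * z a - y a * z' a := by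
  refine eq_left_of_hasDerivAt_zero (f := fun t => y' t * z t - y t * z' t)
    ((hy'c.mul hzc).sub (hyc.mul hz'c)) (fun t ht => ?_) hx
  refine (((hy' t ht).mul (hz t ht)).sub ((hy t ht).mul (hz' t ht))).congr_deriv ?_
  ring

theorem eq_and_deriv_eq_of_linear_ode
    (hyc : ContinuousOn y (Ici a)) (hy'c : ContinuousOn y' (Ici a))
    (hzc : ContinuousOn z (Ici a)) (hz'c : ContinuousOn z' (Ici a))
    (hy : ∀ t ∈ Ioi a, HasDerivAt y (y' t) t) (hy' : ∀ t ∈ Ioi a, HasDerivAt y' (q t * y t) t)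
    (hz : ∀ t ∈ Ioi a, HasDerivAt z (z' t) t) (hz' : ∀ t ∈ Ioi a, HasDerivAt z' (q t * z t) t)
    (hz0 : ∀ t ∈ Ici a, z t ≠ 0) (ha : y a = z a) (ha' : y' a = z' a) (hx : a ≤ x) :
    y x = z x ∧ y' x = z' x := by
  have hW (t : ℝ) (ht : a ≤ t) : y' t * z t - y t * z' t = 0 := by
    rw [wronskian_eq_left hyc hy'c hzc hz'c hy hy' hz hz' ht, ha, ha']
    ring
  have hquot : y x / z x = y a / z a := by
    refine eq_left_of_hasDerivAt_zero (f := fun t => y t / z t) (hyc.div hzc hz0)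
      (fun t ht => ?_) hx
    have htIci : t ∈ Ici a := Ioi_subset_Ici_self ht
    refine ((hy t ht).div (hz t ht) (hz0 t htIci)).congr_deriv ?_
    rw [hW t htIci, zero_div]
  have hval : y x = z x := by
    rwa [ha, div_self (hz0 a self_mem_Ici), div_eq_one_iff_eq (hz0 x hx)] at hquot
  refine ⟨hval, mul_right_cancel₀ (hz0 x hx) ?_⟩
  linear_combination hW x hx + z' x * hval

end LinearODE

/-- The extended gamma function `Γ_x(s)` of Chaudhry and Zubair. For `0 < x` it equals
`2 * x ^ (s / 2) * K_s(2 √x)` with `K_s` the Macdonald function, and for `x = 0 < s` it is `Γ(s)`;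
it is used in place of `K_s` because it stays finite at `x = 0`. -/
def extGamma (s x : ℝ) : ℝ :=
  ∫ t in Ioi (0 : ℝ), exp (-t - x / t) * t ^ (s - 1)

section ExtGamma

variable {s s' x α β : ℝ}

theorem exp_neg_sub_div_mul_rpow_nonneg (s x : ℝ) :
    ∀ t ∈ Ioi (0 : ℝ), 0 ≤ exp (-t - x / t) * t ^ (s - 1) :=
  fun _ ht => mul_nonneg (exp_pos _).le (rpow_nonneg (mem_Ioi.1 ht).le _)

theorem exp_neg_sub_div_mul_rpow_le (s : ℝ) (hx : 0 ≤ x) :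
    ∀ t ∈ Ioi (0 : ℝ), ‖exp (-t - x / t) * t ^ (s - 1)‖ ≤ exp (-t) * t ^ (s - 1) := by
  intro t (ht : 0 < t)
  rw [norm_of_nonneg (exp_neg_sub_div_mul_rpow_nonneg s x t ht)]
  gcongr
  exact sub_le_self _ (by positivity)

theorem integrableOn_exp_neg_sub_div_mul_rpow_of_nonneg (hs : 0 < s) (hx : 0 ≤ x) :
    IntegrableOn (fun t : ℝ => exp (-t - x / t) * t ^ (s - 1)) (Ioi 0) :=
  Integrable.mono' (GammaIntegral_convergent hs) (by fun_prop)
    (ae_restrict_of_forall_mem measurableSet_Ioi (exp_neg_sub_div_mul_rpow_le s hx))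

theorem integrableOn_exp_neg_sub_div_mul_rpow (s : ℝ) (hx : 0 < x) :
    IntegrableOn (fun t : ℝ => exp (-t - x / t) * t ^ (s - 1)) (Ioi 0) := by
  obtain ⟨n, hn⟩ := exists_nat_gt (-s)
  have hΓ := (GammaIntegral_convergent (s := n + s) (by linarith)).const_mul (n.factorial / x ^ n)
  refine hΓ.mono' (by fun_prop) (ae_restrict_of_forall_mem measurableSet_Ioi ?_)
  intro t (ht : 0 < t)
  -- The singularity of `t ^ (s - 1)` at `0` is absorbed by `exp (-y) ≤ n! / y ^ n` for `y = x / t`.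
  have hexp : exp (-(x / t)) ≤ n.factorial / x ^ n * t ^ n := by
    have h := pow_div_factorial_le_exp (x / t) (by positivity) n
    rw [exp_neg]
    refine (inv_anti₀ (by positivity) h).trans_eq ?_
    rw [div_pow]
    field_simp
  rw [norm_of_nonneg (exp_neg_sub_div_mul_rpow_nonneg s x t ht), sub_eq_add_neg (-t), exp_add,
    add_sub_assoc, rpow_add ht, rpow_natCast]
  calc exp (-t) * exp (-(x / t)) * t ^ (s - 1)
      ≤ exp (-t) * (n.factorial / x ^ n * t ^ n) * t ^ (s - 1) := by gcongr
    _ = n.factorial / x ^ n * (exp (-t) * (t ^ n * t ^ (s - 1))) := by ring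

theorem extGamma_pos (h : IntegrableOn (fun t : ℝ => exp (-t - x / t) * t ^ (s - 1)) (Ioi 0)) :
    0 < extGamma s x := by
  refine (setIntegral_pos_iff_support_of_nonneg_ae (ae_restrict_of_forall_mem measurableSet_Ioi
    (exp_neg_sub_div_mul_rpow_nonneg s x)) h).2 ?_
  have hsupp : Ioi 0 ⊆ Function.support fun t : ℝ => exp (-t - x / t) * t ^ (s - 1) :=
    fun t ht => (mul_pos (exp_pos _) (rpow_pos_of_pos ht _)).ne'
  rw [inter_eq_right.2 hsupp, volume_Ioi]
  exact ENNReal.zero_lt_top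

theorem extGamma_zero (hs : 0 < s) : extGamma s 0 = Gamma s := by
  simp only [extGamma, zero_div, sub_zero, Gamma_eq_integral hs]

theorem hasDerivAt_extGamma (s : ℝ) (hx : 0 < x) :
    HasDerivAt (extGamma s) (-extGamma (s - 1) x) x := by
  have hbound : ∀ t ∈ Ioi (0 : ℝ), ∀ y ∈ Ioi (x / 2),
      ‖-(exp (-t - y / t) * t ^ (s - 1 - 1))‖ ≤ exp (-t - x / 2 / t) * t ^ (s - 1 - 1) := by
    intro t (ht : 0 < t) y (hy : x / 2 < y)
    rw [norm_neg, norm_of_nonneg (exp_neg_sub_div_mul_rpow_nonneg (s - 1) y t ht)]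
    gcongr
  have hderiv : ∀ t ∈ Ioi (0 : ℝ), ∀ y ∈ Ioi (x / 2),
      HasDerivAt (fun y => exp (-t - y / t) * t ^ (s - 1))
        (-(exp (-t - y / t) * t ^ (s - 1 - 1))) y := by
    intro t (ht : 0 < t) y _
    have hexponent : HasDerivAt (fun y => -t - y / t) (-(1 / t)) y :=
      ((hasDerivAt_id y).div_const t).const_sub (-t)
    refine (hexponent.exp.mul_const (t ^ (s - 1))).congr_deriv ?_
    rw [rpow_sub_one ht.ne' (s - 1)]
    ring
  rw [extGamma, ← integral_neg]
  exact (hasDerivAt_integral_of_dominated_loc_of_deriv_le (μ := volume.restrict (Ioi 0))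
    (F := fun y t => exp (-t - y / t) * t ^ (s - 1))
    (F' := fun y t => -(exp (-t - y / t) * t ^ (s - 1 - 1)))
    (bound := fun t => exp (-t - x / 2 / t) * t ^ (s - 1 - 1))
    (Ioi_mem_nhds (half_lt_self hx)) (Eventually.of_forall fun y => by fun_prop)
    (integrableOn_exp_neg_sub_div_mul_rpow s hx) (by fun_prop)
    (ae_restrict_of_forall_mem measurableSet_Ioi hbound)
    (integrableOn_exp_neg_sub_div_mul_rpow (s - 1) (half_pos hx))
    (ae_restrict_of_forall_mem measurableSet_Ioi hderiv)).2

theorem continuousOn_extGamma (hs : 0 < s) : ContinuousOn (extGamma s) (Ici 0) := by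
  refine fun x _ => continuousWithinAt_of_dominated (Eventually.of_forall fun y => by fun_prop) ?_
    (GammaIntegral_convergent hs) (ae_of_all _ fun t => ?_)
  · filter_upwards [self_mem_nhdsWithin] with y hy
    exact ae_restrict_of_forall_mem measurableSet_Ioi (exp_neg_sub_div_mul_rpow_le s hy)
  · exact Continuous.continuousWithinAt (by fun_prop)

theorem extGamma_eq_integral_exp (s x : ℝ) :
    extGamma s x = ∫ θ, exp (s * θ - exp θ - x * exp (-θ)) := by
  rw [extGamma, ← integral_comp_exp]
  refine integral_congr_ae (ae_of_all _ fun θ => ?_)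
  simp only [smul_eq_mul, ← exp_mul, ← exp_add, exp_neg θ]
  congr 1
  ring

theorem extGamma_eq_rpow_mul_extGamma_neg (s : ℝ) (hx : 0 < x) :
    extGamma s x = x ^ s * extGamma (-s) x := by
  simp only [extGamma_eq_integral_exp]
  rw [← integral_sub_left_eq_self _ _ (log x), ← integral_const_mul]
  refine integral_congr_ae (ae_of_all _ fun θ => ?_)
  simp only [neg_sub, exp_sub, exp_log hx, exp_neg, mul_sub, neg_mul, rpow_def_of_pos hx]
  field_simp

theorem hasDerivAt_extGamma_one_sub (s : ℝ) (hx : 0 < x) :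
    HasDerivAt (extGamma s) (-(x ^ (s - 1) * extGamma (1 - s) x)) x := by
  have h := hasDerivAt_extGamma s hx
  rwa [extGamma_eq_rpow_mul_extGamma_neg (s - 1) hx, neg_sub] at h

theorem exp_neg_mul_sub_div_mul_rpow (hα : 0 < α) :
    ∀ t ∈ Ioi (0 : ℝ), exp (-(α * t) - β / t) * t ^ (s - 1) =
      α ^ (1 - s) * (exp (-(α * t) - α * β / (α * t)) * (α * t) ^ (s - 1)) := by
  intro t (ht : 0 < t)
  have hcancel : α ^ (1 - s) * α ^ (s - 1) = 1 := by
    rw [← rpow_add hα, sub_add_sub_cancel', sub_self, rpow_zero]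
  rw [mul_div_mul_left _ _ hα.ne', mul_rpow hα.le ht.le]
  linear_combination -(exp (-(α * t) - β / t) * t ^ (s - 1)) * hcancel

theorem integrableOn_exp_neg_mul_sub_div_mul_rpow (s : ℝ) (hα : 0 < α) (hβ : 0 < β) :
    IntegrableOn (fun t : ℝ => exp (-(α * t) - β / t) * t ^ (s - 1)) (Ioi 0) := by
  rw [integrableOn_congr_fun (exp_neg_mul_sub_div_mul_rpow hα) measurableSet_Ioi]
  refine Integrable.const_mul ?_ _
  refine (integrableOn_Ioi_comp_mul_left_iff
    (fun t => exp (-t - α * β / t) * t ^ (s - 1)) 0 hα).2 ?_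
  rw [mul_zero]
  exact integrableOn_exp_neg_sub_div_mul_rpow s (mul_pos hα hβ)

theorem integral_exp_neg_mul_sub_div_mul_rpow (s β : ℝ) (hα : 0 < α) :
    ∫ t in Ioi (0 : ℝ), exp (-(α * t) - β / t) * t ^ (s - 1) = α ^ (-s) * extGamma s (α * β) := by
  rw [setIntegral_congr_fun measurableSet_Ioi (exp_neg_mul_sub_div_mul_rpow hα),
    integral_const_mul,
    integral_comp_mul_left_Ioi (fun t => exp (-t - α * β / t) * t ^ (s - 1)) 0 hα, mul_zero,
    smul_eq_mul, ← mul_assoc, ← rpow_neg_one α, ← rpow_add hα,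
    show 1 - s + -1 = -s by ring, extGamma]

-- Substitute `r = t * q` in the integral for the second factor, then integrate over `t` first.
theorem extGamma_mul_extGamma_eq_integral_Ioi (s s' : ℝ) (hx : 0 < x) :
    extGamma s x * extGamma s' x =
      ∫ q in Ioi (0 : ℝ), q ^ (s' - 1) * (1 + q) ^ (-(s + s')) *
        extGamma (s + s') ((1 + q) * (x + x / q)) := by
  let f (t q : ℝ) : ℝ :=
    exp (-t - x / t) * t ^ s * t ^ (s' - 1) * (exp (-(t * q) - x / t / q) * q ^ (s' - 1))
  have hf (t q : ℝ) (ht : 0 < t) :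
      f t q = q ^ (s' - 1) * (exp (-((1 + q) * t) - (x + x / q) / t) * t ^ (s + s' - 1)) := by
    have hexp : exp (-((1 + q) * t) - (x + x / q) / t) =
        exp (-t - x / t) * exp (-(t * q) - x / t / q) := by
      rw [← exp_add]
      ring_nf
    simp only [f]
    rw [hexp, add_sub_assoc, rpow_add ht]
    ring
  have hswap : ∫ t in Ioi 0, ∫ q in Ioi 0, f t q = ∫ q in Ioi 0, ∫ t in Ioi 0, f t q := by
    refine setIntegral_setIntegral_swap_of_nonneg measurableSet_Ioi measurableSet_Ioi
      (by fun_prop) (fun t (ht : 0 < t) q (hq : 0 < q) => by positivity)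
      (fun t (ht : 0 < t) => ?_) (fun q (hq : 0 < q) => ?_)
    · exact (integrableOn_exp_neg_mul_sub_div_mul_rpow s' ht (div_pos hx ht)).const_mul _
    · rw [integrableOn_congr_fun (fun t (ht : t ∈ Ioi 0) => hf t q ht) measurableSet_Ioi]
      exact (integrableOn_exp_neg_mul_sub_div_mul_rpow _ (by positivity)
        (by positivity)).const_mul _
  calc extGamma s x * extGamma s' x
      = ∫ t in Ioi 0, ∫ q in Ioi 0, f t q := by
        rw [extGamma, ← integral_mul_const]
        refine setIntegral_congr_fun measurableSet_Ioi fun t (ht : 0 < t) => ?_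
        simp only [f]
        rw [integral_const_mul, integral_exp_neg_mul_sub_div_mul_rpow _ _ ht,
          mul_div_cancel₀ _ ht.ne', rpow_sub_one ht.ne' s, rpow_sub_one ht.ne' s', rpow_neg ht.le]
        field_simp
    _ = ∫ q in Ioi 0, ∫ t in Ioi 0, f t q := hswap
    _ = _ := by
        refine setIntegral_congr_fun measurableSet_Ioi fun q (hq : 0 < q) => ?_
        rw [setIntegral_congr_fun measurableSet_Ioi fun t ht => hf t q ht, integral_const_mul,
          integral_exp_neg_mul_sub_div_mul_rpow _ _ (by positivity), mul_assoc]

theorem extGamma_mul_extGamma_eq_integral_exp (s s' : ℝ) (hx : 0 < x) :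
    extGamma s x * extGamma s' x =
      2 * ∫ θ, exp ((s' - s) * θ) * (2 * cosh θ) ^ (-(s + s')) *
        extGamma (s + s') (4 * x * cosh θ ^ 2) := by
  rw [extGamma_mul_extGamma_eq_integral_Ioi s s' hx, ← integral_comp_exp]
  have hscale := Measure.integral_comp_mul_left (fun φ => exp φ • (exp φ ^ (s' - 1) *
    (1 + exp φ) ^ (-(s + s')) * extGamma (s + s') ((1 + exp φ) * (x + x / exp φ)))) 2
  rw [abs_of_nonneg (by norm_num), smul_eq_mul, eq_inv_mul_iff_mul_eq₀ two_ne_zero] at hscale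
  rw [← hscale]
  congr 2 with θ
  have hcosh : 1 + exp (2 * θ) = exp θ * (2 * cosh θ) := by
    rw [cosh_eq, exp_neg, two_mul θ, exp_add]
    field_simp
    ring
  have harg : (1 + exp (2 * θ)) * (x + x / exp (2 * θ)) = 4 * x * cosh θ ^ 2 := by
    have : x + x / exp (2 * θ) = x * (1 + exp (2 * θ)) / (exp θ * exp θ) := by
      rw [two_mul, exp_add]
      field_simp
      ring
    rw [this, hcosh]
    field_simp
    ring
  rw [harg, hcosh, mul_rpow (exp_pos θ).le (by positivity), smul_eq_mul]
  simp only [← exp_mul]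
  rw [show (s' - s) * θ = 2 * θ + (2 * θ * (s' - 1) + θ * -(s + s')) by ring, exp_add, exp_add]
  ring

theorem extGamma_mul_extGamma_eq_integral_cosh (s s' : ℝ) (hx : 0 < x) :
    extGamma s x * extGamma s' x =
      2 * ∫ θ, cosh ((s - s') * θ) * (2 * cosh θ) ^ (-(s + s')) *
        extGamma (s + s') (4 * x * cosh θ ^ 2) := by
  have hpos := mul_pos (extGamma_pos (integrableOn_exp_neg_sub_div_mul_rpow s hx))
    (extGamma_pos (integrableOn_exp_neg_sub_div_mul_rpow s' hx))
  have h := extGamma_mul_extGamma_eq_integral_exp s s' hx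
  have h' := extGamma_mul_extGamma_eq_integral_exp s' s hx
  rw [mul_comm (extGamma s' x), add_comm s'] at h'
  have hint := Integrable.of_integral_ne_zero (right_ne_zero_of_mul (h ▸ hpos.ne'))
  have hint' := Integrable.of_integral_ne_zero (right_ne_zero_of_mul (h' ▸ hpos.ne'))
  calc extGamma s x * extGamma s' x
      = (∫ θ, exp ((s' - s) * θ) * (2 * cosh θ) ^ (-(s + s')) *
            extGamma (s + s') (4 * x * cosh θ ^ 2)) +
          ∫ θ, exp ((s - s') * θ) * (2 * cosh θ) ^ (-(s + s')) *
            extGamma (s + s') (4 * x * cosh θ ^ 2) := by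
        linarith
    _ = _ := by
        rw [← integral_add hint hint', ← integral_const_mul]
        congr 1 with θ
        rw [cosh_eq ((s - s') * θ), ← neg_mul, neg_sub]
        ring

theorem extGamma_mul_extGamma_sub_one (s : ℝ) (hx : 0 < x) :
    extGamma s x * extGamma (s - 1) x =
      ∫ θ, (2 * cosh θ) ^ (2 - 2 * s) * extGamma (2 * s - 1) (4 * x * cosh θ ^ 2) := by
  rw [extGamma_mul_extGamma_eq_integral_cosh s (s - 1) hx, ← integral_const_mul]
  congr 1 with θ
  have hcosh : (2 * cosh θ) ^ (2 - 2 * s) = (2 * cosh θ) ^ (-(2 * s - 1)) * (2 * cosh θ) := by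
    rw [← rpow_add_one (by positivity)]
    ring_nf
  rw [hcosh, sub_sub_cancel, one_mul, show s + (s - 1) = 2 * s - 1 by ring]
  ring

end ExtGamma

section CoshIntegral

variable {y z : ℝ}

theorem sq_le_cosh_sq (θ : ℝ) : θ ^ 2 ≤ cosh θ ^ 2 := by
  have hsinh : θ ^ 2 ≤ sinh θ ^ 2 := by
    rw [sq_le_sq, abs_sinh]
    exact self_le_sinh_iff.2 (abs_nonneg θ)
  linarith [cosh_sq θ]

theorem integrable_cosh_rpow_mul_exp_neg_mul_cosh_sq (p : ℝ) (hy : 0 < y) :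
    Integrable fun θ => cosh θ ^ p * exp (-y * cosh θ ^ 2) := by
  obtain ⟨n, hn⟩ := exists_nat_ge p
  have hy2 : 0 < y / 2 := half_pos hy
  have hgauss := (integrable_exp_neg_mul_sq hy2).const_mul (n.factorial / (y / 2) ^ n)
  refine hgauss.mono' (by fun_prop) (ae_of_all _ fun θ => ?_)
  -- Half of the exponent absorbs the power, the other half is a Gaussian since `|θ| ≤ cosh θ`.
  have hpow : cosh θ ^ p ≤ n.factorial / (y / 2) ^ n * exp (y / 2 * cosh θ ^ 2) := by
    have hfact := pow_div_factorial_le_exp (y / 2 * cosh θ ^ 2) (by positivity) n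
    calc cosh θ ^ p
        ≤ (cosh θ ^ 2) ^ n := by
          rw [← rpow_natCast, ← rpow_natCast, ← rpow_mul (cosh_pos θ).le]
          refine rpow_le_rpow_of_exponent_le (one_le_cosh θ) ?_
          push_cast
          linarith [n.cast_nonneg (α := ℝ)]
      _ = n.factorial / (y / 2) ^ n * ((y / 2 * cosh θ ^ 2) ^ n / n.factorial) := by
          rw [mul_pow]
          field_simp
      _ ≤ _ := by gcongr
  rw [norm_of_nonneg (by positivity)]
  calc cosh θ ^ p * exp (-y * cosh θ ^ 2)
      ≤ n.factorial / (y / 2) ^ n * exp (y / 2 * cosh θ ^ 2) * exp (-y * cosh θ ^ 2) := by gcongr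
    _ = n.factorial / (y / 2) ^ n * exp (-(y / 2) * cosh θ ^ 2) := by
        rw [mul_assoc, ← exp_add]
        ring_nf
    _ ≤ n.factorial / (y / 2) ^ n * exp (-(y / 2) * θ ^ 2) :=
        mul_le_mul_of_nonneg_left (exp_le_exp.2
          (mul_le_mul_of_nonpos_left (sq_le_cosh_sq θ) (neg_nonpos.2 hy2.le))) (by positivity)

theorem integral_rpow_mul_integral_cosh (s p : ℝ) (hz : 0 < z) :
    ∫ t in Ioi (0 : ℝ), exp (-t) * t ^ (s - 1) * ∫ θ, cosh θ ^ p * exp (-(z / t) * cosh θ ^ 2) =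
      ∫ θ, cosh θ ^ p * extGamma s (z * cosh θ ^ 2) := by
  have hslice (θ t : ℝ) :
      exp (-t) * t ^ (s - 1) * (cosh θ ^ p * exp (-(z / t) * cosh θ ^ 2)) =
        cosh θ ^ p * (exp (-t - z * cosh θ ^ 2 / t) * t ^ (s - 1)) := by
    rw [show -t - z * cosh θ ^ 2 / t = -t + -(z / t) * cosh θ ^ 2 by ring, exp_add]
    ring
  have hswap := setIntegral_setIntegral_swap_of_nonneg (μ := volume) (ν := volume)
    (s := Ioi 0) (t := univ)
    (f := fun t θ => exp (-t) * t ^ (s - 1) * (cosh θ ^ p * exp (-(z / t) * cosh θ ^ 2)))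
    measurableSet_Ioi MeasurableSet.univ (by fun_prop) (fun t (ht : 0 < t) θ _ => by positivity)
    (fun t (ht : 0 < t) => ?_) (fun θ _ => ?_)
  · simp only [Measure.restrict_univ, integral_const_mul] at hswap
    rw [hswap]
    simp only [hslice, integral_const_mul, extGamma]
  · exact (integrable_cosh_rpow_mul_exp_neg_mul_cosh_sq p
      (div_pos hz ht)).integrableOn.const_mul _
  · simp only [hslice]
    exact (integrableOn_exp_neg_sub_div_mul_rpow s (by positivity)).const_mul _

end CoshIntegral

section Tricomi

variable {a b z : ℝ}

-- Write `(1 + s) ^ (b - a - 1)` as a Gamma integral in `r` and integrate over `s` first.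
theorem tricomiU_eq_integral_add_rpow (ha : 0 < a) (hab : 0 < a - b + 1) (hz : 0 ≤ z) :
    tricomiU a b z =
      1 / Gamma (a - b + 1) * ∫ r in Ioi 0, exp (-r) * r ^ (a - b) * (z + r) ^ (-a) := by
  let f (s r : ℝ) : ℝ :=
    exp (-z * s) * s ^ (a - 1) * (r ^ (a - b + 1 - 1) * exp (-((1 + s) * r)))
  have hf (s r : ℝ) : f s r = exp (-r) * r ^ (a - b) * (s ^ (a - 1) * exp (-((z + r) * s))) := by
    have hexp : exp (-z * s) * exp (-((1 + s) * r)) = exp (-r) * exp (-((z + r) * s)) := by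
      rw [← exp_add, ← exp_add]
      ring_nf
    simp only [f, add_sub_cancel_right]
    linear_combination s ^ (a - 1) * r ^ (a - b) * hexp
  have hinner_r (s : ℝ) (hs : s ∈ Ioi 0) : ∫ r in Ioi 0, f s r =
      Gamma (a - b + 1) * (exp (-z * s) * s ^ (a - 1) * (1 + s) ^ (b - a - 1)) := by
    have hs1 : 0 < 1 + s := add_pos one_pos hs
    simp only [f]
    rw [integral_const_mul, integral_rpow_mul_exp_neg_mul_Ioi hab hs1, one_div, inv_rpow hs1.le,
      ← rpow_neg hs1.le]
    ring_nf
  have hinner_s (r : ℝ) (hr : r ∈ Ioi 0) : ∫ s in Ioi 0, f s r =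
      Gamma a * (exp (-r) * r ^ (a - b) * (z + r) ^ (-a)) := by
    have hzr : 0 < z + r := add_pos_of_nonneg_of_pos hz hr
    simp only [hf]
    rw [integral_const_mul, integral_rpow_mul_exp_neg_mul_Ioi ha hzr, one_div, inv_rpow hzr.le,
      ← rpow_neg hzr.le]
    ring
  have hswap : ∫ s in Ioi 0, ∫ r in Ioi 0, f s r = ∫ r in Ioi 0, ∫ s in Ioi 0, f s r := by
    refine setIntegral_setIntegral_swap_of_nonneg measurableSet_Ioi measurableSet_Ioi
      (by fun_prop) (fun s (hs : 0 < s) r (hr : 0 < r) => by positivity) (fun s (hs : 0 < s) => ?_)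
      (fun r (hr : 0 < r) => ?_)
    · exact Integrable.of_integral_ne_zero (by rw [hinner_r s hs]; positivity)
    · exact Integrable.of_integral_ne_zero (by rw [hinner_s r hr]; positivity)
  rw [setIntegral_congr_fun measurableSet_Ioi hinner_r,
    setIntegral_congr_fun measurableSet_Ioi hinner_s,
    integral_const_mul, integral_const_mul] at hswap
  have hΓa := (Gamma_pos_of_pos ha).ne'
  have hΓc := (Gamma_pos_of_pos hab).ne'
  rw [tricomiU, one_div_mul_eq_div, one_div_mul_eq_div, div_eq_div_iff hΓa hΓc]
  linarith

theorem tricomiU_zero (ha : 0 < a) (hb : b < 1) :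
    tricomiU a b 0 = Gamma (1 - b) / Gamma (a - b + 1) := by
  rw [tricomiU_eq_integral_add_rpow ha (by linarith) le_rfl, one_div_mul_eq_div,
    Gamma_eq_integral (sub_pos.2 hb)]
  congr 1
  refine setIntegral_congr_fun measurableSet_Ioi fun r (hr : 0 < r) => ?_
  rw [zero_add, mul_assoc, ← rpow_add hr]
  ring_nf

theorem tricomiU_kummer_transformation (ha : 0 < a) (hab : 0 < a - b + 1) (hz : 0 < z) :
    tricomiU a b z = z ^ (1 - b) * tricomiU (a - b + 1) (2 - b) z := by
  have hscale := integral_comp_mul_left_Ioi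
    (fun r : ℝ => exp (-r) * r ^ (a - b) * (z + r) ^ (-a)) 0 hz
  rw [mul_zero, smul_eq_mul, eq_inv_mul_iff_mul_eq₀ hz.ne'] at hscale
  rw [tricomiU_eq_integral_add_rpow ha hab hz.le, tricomiU, ← hscale,
    mul_left_comm (z ^ (1 - b))]
  congr 1
  rw [← integral_const_mul, ← integral_const_mul]
  refine setIntegral_congr_fun measurableSet_Ioi fun s (hs : 0 < s) => ?_
  have hpow : z ^ (1 - b) = z * (z ^ (a - b) * z ^ (-a)) := by
    rw [← rpow_add hz, mul_comm, ← rpow_add_one hz.ne']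
    ring_nf
  rw [show z + z * s = z * (1 + s) by ring, mul_rpow hz.le hs.le,
    mul_rpow hz.le (by positivity), hpow, add_sub_cancel_right,
    show 2 - b - (a - b + 1) - 1 = -a by ring, neg_mul]
  ring

theorem sqrt_pi_mul_exp_neg_mul_tricomiU_half (b z : ℝ) :
    √π * (exp (-z) * tricomiU (1 / 2) b z) =
      ∫ θ, cosh θ ^ (2 * b - 2) * exp (-z * cosh θ ^ 2) := by
  have heven := integral_comp_abs (f := fun θ => cosh θ ^ (2 * b - 2) * exp (-z * cosh θ ^ 2))
  simp only [cosh_abs] at heven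
  rw [heven, tricomiU, Gamma_one_half_eq, mul_left_comm, ← mul_assoc √π,
    mul_one_div_cancel (sqrt_ne_zero'.2 pi_pos), one_mul, ← integral_comp_sinh_sq_Ioi,
    ← integral_const_mul, ← integral_const_mul]
  refine setIntegral_congr_fun measurableSet_Ioi fun θ (hθ : 0 < θ) => ?_
  have hsinh : 0 < sinh θ := sinh_pos_iff.2 hθ
  have hexp : exp (-z * cosh θ ^ 2) = exp (-z) * exp (-z * sinh θ ^ 2) := by
    rw [cosh_sq, ← exp_add]
    ring_nf
  have hsinh_pow : (sinh θ ^ 2) ^ ((1 : ℝ) / 2 - 1) = (sinh θ)⁻¹ := by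
    rw [← rpow_natCast, ← rpow_mul hsinh.le, ← rpow_neg_one]
    norm_num
  have hcosh_pow : cosh θ ^ (2 * b - 2) = cosh θ * (1 + sinh θ ^ 2) ^ (b - 1 / 2 - 1) := by
    rw [add_comm, ← cosh_sq, ← rpow_natCast, ← rpow_mul (cosh_pos θ).le, mul_comm (cosh θ),
      ← rpow_add_one (cosh_pos θ).ne']
    push_cast
    ring_nf
  simp only [smul_eq_mul]
  rw [hexp, hsinh_pow, hcosh_pow]
  field_simp

end Tricomi

section Mixture

variable {x t h : ℝ}

theorem integral_rpow_mul_tricomiU_half (s : ℝ) (hx : 0 < x) :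
    √π * ∫ t in Ioi 0, exp (-t) * t ^ (2 * s - 2) *
        (exp (-(4 * x / t)) * tricomiU (1 / 2) (2 - s) (4 * x / t)) =
      2 ^ (2 * s - 2) * (extGamma s x * extGamma (s - 1) x) := by
  have hpow (θ : ℝ) : cosh θ ^ (2 - 2 * s) = 2 ^ (2 * s - 2) * (2 * cosh θ) ^ (2 - 2 * s) := by
    rw [mul_rpow two_pos.le (cosh_pos θ).le, ← mul_assoc, ← rpow_add two_pos,
      sub_add_sub_cancel, sub_self, rpow_zero, one_mul]
  calc √π * ∫ t in Ioi 0, exp (-t) * t ^ (2 * s - 2) *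
          (exp (-(4 * x / t)) * tricomiU (1 / 2) (2 - s) (4 * x / t))
      = ∫ t in Ioi 0, exp (-t) * t ^ (2 * s - 1 - 1) *
          ∫ θ, cosh θ ^ (2 - 2 * s) * exp (-(4 * x / t) * cosh θ ^ 2) := by
        rw [← integral_const_mul]
        refine setIntegral_congr_fun measurableSet_Ioi fun t _ => ?_
        rw [mul_left_comm, sqrt_pi_mul_exp_neg_mul_tricomiU_half]
        ring_nf
    _ = ∫ θ, cosh θ ^ (2 - 2 * s) * extGamma (2 * s - 1) (4 * x * cosh θ ^ 2) :=
        integral_rpow_mul_integral_cosh _ _ (by positivity)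
    _ = 2 ^ (2 * s - 2) * (extGamma s x * extGamma (s - 1) x) := by
        simp only [extGamma_mul_extGamma_sub_one s hx, hpow, mul_assoc, integral_const_mul]

theorem nu2_zero : nu2 0 = 2 * 6 ^ ((1 : ℝ) / 3) / Gamma (1 / 3) := by
  have hU : tricomiU (1 / 6) (2 / 3) 0 = Gamma (1 / 3) / √π := by
    rw [tricomiU_zero (by norm_num) (by norm_num), ← Gamma_one_half_eq]
    norm_num
  have hΓ : Gamma (1 / 3) ≠ 0 := (Gamma_pos_of_pos (by norm_num)).ne'
  have hπ : √π ≠ 0 := sqrt_ne_zero'.2 pi_pos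
  simp only [nu2, zero_pow three_ne_zero, mul_zero, zero_div, exp_zero, hU]
  field_simp

theorem nu2_eq_tricomiU_half (hx : 0 < x) :
    nu2 x = 2 * 6 ^ ((1 : ℝ) / 3) * √π / Gamma (1 / 3) ^ 2 * (8 * x ^ 3 / 9) ^ ((1 : ℝ) / 3) *
      (exp (-(8 * x ^ 3 / 9)) * tricomiU (1 / 2) (4 / 3) (8 * x ^ 3 / 9)) := by
  have hU := tricomiU_kummer_transformation (a := 1 / 6) (b := 2 / 3) (z := 8 * x ^ 3 / 9)
    (by norm_num) (by norm_num) (by positivity)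
  norm_num at hU
  rw [nu2, hU]
  ring_nf

theorem nu2_rpow_mul (ht : 0 < t) (hh : 0 < h) :
    nu2 (t ^ (-(1 : ℝ) / 3) * h) = 2 * 6 ^ ((1 : ℝ) / 3) * √π / Gamma (1 / 3) ^ 2 *
      (4 * (2 / 9 * h ^ 3) / t) ^ ((1 : ℝ) / 3) * (exp (-(4 * (2 / 9 * h ^ 3) / t)) *
        tricomiU (1 / 2) (4 / 3) (4 * (2 / 9 * h ^ 3) / t)) := by
  have hcube : (t ^ (-(1 : ℝ) / 3)) ^ 3 = t⁻¹ := by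
    rw [← rpow_natCast, ← rpow_mul ht.le, ← rpow_neg_one]
    norm_num
  have harg : 8 * (t ^ (-(1 : ℝ) / 3) * h) ^ 3 / 9 = 4 * (2 / 9 * h ^ 3) / t := by
    rw [mul_pow, hcube]
    ring
  rw [nu2_eq_tricomiU_half (by positivity), harg]

theorem integral_nu2_zero :
    ∫ t in Ioi (0 : ℝ), exp (-t) * t ^ (-(1 : ℝ) / 3) * nu2 0 =
      2 * 6 ^ ((1 : ℝ) / 3) / Gamma (1 / 3) ^ 2 * (Gamma (1 / 3) * Gamma (2 / 3)) := by
  have hΓ : Gamma (1 / 3) ≠ 0 := (Gamma_pos_of_pos (by norm_num)).ne'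
  rw [integral_mul_const, Gamma_eq_integral (s := 2 / 3) (by norm_num), nu2_zero,
    show (2 / 3 - 1 : ℝ) = -1 / 3 by norm_num]
  field_simp

theorem integral_nu2_of_pos (hh : 0 < h) :
    ∫ t in Ioi (0 : ℝ), exp (-t) * t ^ (-(1 : ℝ) / 3) * nu2 (t ^ (-(1 : ℝ) / 3) * h) =
      2 * 6 ^ ((1 : ℝ) / 3) / Gamma (1 / 3) ^ 2 *
        (extGamma (1 / 3) (2 / 9 * h ^ 3) * extGamma (2 / 3) (2 / 9 * h ^ 3)) := by
  have hintegrand (t : ℝ) (ht : 0 < t) := nu2_rpow_mul ht hh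
  have hx : 0 < 2 / 9 * h ^ 3 := by positivity
  generalize 2 / 9 * h ^ 3 = x at hintegrand hx ⊢
  have hmixture : ∫ t in Ioi (0 : ℝ), exp (-t) * t ^ (-(1 : ℝ) / 3) *
      nu2 (t ^ (-(1 : ℝ) / 3) * h) =
        2 * 6 ^ ((1 : ℝ) / 3) * √π / Gamma (1 / 3) ^ 2 * (4 * x) ^ ((1 : ℝ) / 3) *
          ∫ t in Ioi 0, exp (-t) * t ^ (2 * (2 / 3) - 2 : ℝ) *
            (exp (-(4 * x / t)) * tricomiU (1 / 2) (2 - 2 / 3) (4 * x / t)) := by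
    rw [← integral_const_mul]
    refine setIntegral_congr_fun measurableSet_Ioi fun t (ht : 0 < t) => ?_
    have hpow : t ^ (2 * (2 / 3) - 2 : ℝ) = t ^ (-(1 : ℝ) / 3) / t ^ ((1 : ℝ) / 3) := by
      rw [← rpow_sub ht]
      norm_num
    rw [hintegrand t ht, div_rpow (by positivity) ht.le, hpow,
      show (2 - 2 / 3 : ℝ) = 4 / 3 by norm_num]
    ring
  have hreflect : extGamma (1 / 3) x = x ^ ((1 : ℝ) / 3) * extGamma (2 / 3 - 1) x := by
    rw [extGamma_eq_rpow_mul_extGamma_neg _ hx, show (2 / 3 - 1 : ℝ) = -(1 / 3) by norm_num]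
  have hpow : (4 * x) ^ ((1 : ℝ) / 3) * 2 ^ (2 * (2 / 3) - 2 : ℝ) = x ^ ((1 : ℝ) / 3) := by
    rw [mul_rpow (by norm_num) hx.le, show (4 : ℝ) = 2 ^ (2 : ℝ) by norm_num,
      ← rpow_mul two_pos.le, mul_right_comm, ← rpow_add two_pos]
    norm_num
  rw [hmixture, hreflect, ← hpow]
  linear_combination 2 * 6 ^ ((1 : ℝ) / 3) / Gamma (1 / 3) ^ 2 * (4 * x) ^ ((1 : ℝ) / 3) *
    integral_rpow_mul_tricomiU_half (2 / 3) hx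

theorem integral_nu2 (hh : 0 ≤ h) :
    ∫ t in Ioi (0 : ℝ), exp (-t) * t ^ (-(1 : ℝ) / 3) * nu2 (t ^ (-(1 : ℝ) / 3) * h) =
      2 * 6 ^ ((1 : ℝ) / 3) / Gamma (1 / 3) ^ 2 *
        (extGamma (1 / 3) (2 / 9 * h ^ 3) * extGamma (2 / 3) (2 / 9 * h ^ 3)) := by
  rcases hh.eq_or_lt with rfl | hh
  · rw [zero_pow three_ne_zero, mul_zero, extGamma_zero (by norm_num), extGamma_zero (by norm_num)]
    simp only [mul_zero, integral_nu2_zero]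
  · exact integral_nu2_of_pos hh

end Mixture

section Airy

variable {h : ℝ}

theorem six_rpow_one_third_pow_three : ((6 : ℝ) ^ ((1 : ℝ) / 3)) ^ 3 = 6 := by
  rw [← rpow_natCast, ← rpow_mul (by norm_num)]
  norm_num

theorem two_ninths_mul_pow_three_rpow (a : ℝ) (hh : 0 ≤ h) :
    (2 / 9 * h ^ 3) ^ a = (6 ^ ((1 : ℝ) / 3) * h / 3) ^ (3 * a) := by
  have hcube : 2 / 9 * h ^ 3 = (6 ^ ((1 : ℝ) / 3) * h / 3) ^ (3 : ℝ) := by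
    rw [rpow_ofNat]
    linear_combination (-h ^ 3 / 27) * six_rpow_one_third_pow_three
  rw [rpow_mul (by positivity), ← hcube]

theorem hasDerivAt_extGamma_pow_three (s : ℝ) (hh : 0 < h) :
    HasDerivAt (fun h => extGamma s (2 / 9 * h ^ 3))
      (-((2 / 9 * h ^ 3) ^ (s - 1) * extGamma (1 - s) (2 / 9 * h ^ 3)) * (2 / 3 * h ^ 2)) h := by
  have hcube : HasDerivAt (fun h : ℝ => 2 / 9 * h ^ 3) (2 / 3 * h ^ 2) h :=
    ((hasDerivAt_pow 3 h).const_mul _).congr_deriv (by norm_num; ring)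
  exact (hasDerivAt_extGamma_one_sub s (by positivity)).comp h hcube

theorem hasDerivAt_extGamma_one_third_pow_three (hh : 0 < h) :
    HasDerivAt (fun h => extGamma (1 / 3) (2 / 9 * h ^ 3))
      (-6 ^ ((1 : ℝ) / 3) * extGamma (2 / 3) (2 / 9 * h ^ 3)) h := by
  refine (hasDerivAt_extGamma_pow_three (1 / 3) hh).congr_deriv ?_
  rw [two_ninths_mul_pow_three_rpow _ hh.le, show 3 * (1 / 3 - 1 : ℝ) = -(2 : ℕ) by norm_num,
    rpow_neg (by positivity), rpow_natCast, show (1 - 1 / 3 : ℝ) = 2 / 3 by norm_num]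
  field_simp
  rw [six_rpow_one_third_pow_three]
  ring

theorem hasDerivAt_extGamma_two_thirds_pow_three (hh : 0 < h) :
    HasDerivAt (fun h => -6 ^ ((1 : ℝ) / 3) * extGamma (2 / 3) (2 / 9 * h ^ 3))
      (2 * h * extGamma (1 / 3) (2 / 9 * h ^ 3)) h := by
  refine ((hasDerivAt_extGamma_pow_three (2 / 3) hh).const_mul _).congr_deriv ?_
  rw [two_ninths_mul_pow_three_rpow _ hh.le, show 3 * (2 / 3 - 1 : ℝ) = -1 by norm_num,
    rpow_neg_one, show (1 - 2 / 3 : ℝ) = 1 / 3 by norm_num]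
  field_simp

theorem airy_eq_extGamma {u : ℝ → ℝ} (hu_smooth : ContDiff ℝ 2 u)
    (hu_ode : ∀ h : ℝ, deriv (deriv u) h = 2 * h * u h) (hu_zero : u 0 = 1)
    (hu'_zero : deriv u 0 = -(6 ^ ((1 : ℝ) / 3) * Gamma (2 / 3) / Gamma (1 / 3))) (hh : 0 ≤ h) :
    Gamma (1 / 3) * u h = extGamma (1 / 3) (2 / 9 * h ^ 3) ∧
      Gamma (1 / 3) * deriv u h = -6 ^ ((1 : ℝ) / 3) * extGamma (2 / 3) (2 / 9 * h ^ 3) := by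
  have hu' : ContDiff ℝ 1 (deriv u) := ContDiff.deriv' hu_smooth
  have hcont (s : ℝ) (hs : 0 < s) :
      ContinuousOn (fun h : ℝ => extGamma s (2 / 9 * h ^ 3)) (Ici 0) :=
    (continuousOn_extGamma hs).comp (by fun_prop) fun h (hh : 0 ≤ h) => by
      rw [mem_Ici]; positivity
  have hcube : 2 / 9 * (0 : ℝ) ^ 3 = 0 := by norm_num
  refine eq_and_deriv_eq_of_linear_ode (q := fun h => 2 * h)
    (y := fun h => Gamma (1 / 3) * u h) (y' := fun h => Gamma (1 / 3) * deriv u h)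
    (z := fun h => extGamma (1 / 3) (2 / 9 * h ^ 3))
    (z' := fun h => -6 ^ ((1 : ℝ) / 3) * extGamma (2 / 3) (2 / 9 * h ^ 3))
    (hu_smooth.continuous.const_mul _).continuousOn (hu'.continuous.const_mul _).continuousOn
    (hcont _ (by norm_num)) ((hcont _ (by norm_num)).const_mul _)
    (fun t _ => ?_) (fun t _ => ?_) (fun t => hasDerivAt_extGamma_one_third_pow_three)
    (fun t => hasDerivAt_extGamma_two_thirds_pow_three) (fun t (ht : 0 ≤ t) => ?_) ?_ ?_ hh
  · exact (hu_smooth.differentiable two_ne_zero t).hasDerivAt.const_mul _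
  · refine ((hu'.differentiable one_ne_zero t).hasDerivAt.const_mul _).congr_deriv ?_
    rw [hu_ode]
    ring
  · exact (extGamma_pos (integrableOn_exp_neg_sub_div_mul_rpow_of_nonneg (by norm_num)
      (by positivity))).ne'
  · simp only [hcube, hu_zero, mul_one, extGamma_zero (s := 1 / 3) (by norm_num)]
  · simp only [hcube, hu'_zero, extGamma_zero (s := 2 / 3) (by norm_num)]
    field_simp

end Airy

/-- the exponential-time mixture of `ν₂` equals `-2·u·u' = -(u²)'`,
where `u` is the normalized Airy function. -/
theorem stmt6
    (u : ℝ → ℝ) (hu_smooth : ContDiff ℝ 2 u)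
    (hu_ode : ∀ h : ℝ, deriv (deriv u) h = 2 * h * u h)
    (hu_zero : u 0 = 1)
    (hu'_zero : deriv u 0 = -((6:ℝ) ^ ((1:ℝ)/3) * Real.Gamma (2/3) / Real.Gamma (1/3)))
    (hu_pos : ∀ h : ℝ, 0 ≤ h → 0 < u h)
    (hu_anti : StrictAntiOn u (Ici 0))
    (hu_lim : Tendsto u atTop (𝓝 0)) :
    ∀ h : ℝ, 0 ≤ h →
      (∫ t in Ioi (0:ℝ), Real.exp (-t) * t ^ (-(1:ℝ)/3) * nu2 (t ^ (-(1:ℝ)/3) * h)) =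
        -2 * u h * deriv u h := by
  intro h hh
  have hΓ : Gamma (1 / 3) ≠ 0 := (Gamma_pos_of_pos (by norm_num)).ne'
  obtain ⟨hu, hu'⟩ := airy_eq_extGamma hu_smooth hu_ode hu_zero hu'_zero hh
  rw [integral_nu2 hh, ← hu, div_mul_eq_mul_div, div_eq_iff (pow_ne_zero 2 hΓ)]
  linear_combination 2 * Gamma (1 / 3) * u h * hu'
end
end

section
/- For every s > 0: ∫₀ˢ (t(s-t))^{-4/3}·exp(-2s/(9·t·(s-t))) dt = 2·4^{1/3}·s^{-5/3}·e^{-8/(9s)}·∫₀^∞ (1+z)^{-1/6}·z^{-1/2}·e^{-8z/(9s)} dz. Equivalently, the additive convolution on [0,∞) of the function f(t) := t^{-4/3}·e^{-2/(9t)} with itself satisfies (f*f)(s) = 2·4^{1/3}·√π·s^{-5/3}·e^{-8/(9s)}·U(1/2, 4/3; 8/(9s)). -/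
open Real MeasureTheory Set Filter Topology

noncomputable section

/-! For `f t = t ^ (-ν) * exp (-c / t)` the product `f t * f (s - t)` depends only on
`p = t * (s - t)`, since `1 / t + 1 / (s - t) = s / p`. Writing `t = s / 2 * (1 + x)` gives
`p = s ^ 2 / 4 * (1 - x ^ 2)`, which is even in `x`; the substitution `z = x ^ 2 / (1 - x ^ 2)`,
for which `1 - x ^ 2 = (1 + z)⁻¹`, then makes `1 / p` affine in `z`, and what remains is the
integral defining `U(1/2, ν; 4c/s)`. -/

section ChangeOfVariables

variable {E : Type*} [NormedAddCommGroup E] [NormedSpace ℝ E]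

lemma intervalIntegral_neg_self_of_even {f : ℝ → E} (hf : ∀ x, f (-x) = f x) (a : ℝ) :
    ∫ x in -a..a, f x = (2 : ℝ) • ∫ x in (0 : ℝ)..a, f x := by
  by_cases hright : IntervalIntegrable f volume 0 a
  · have hleft : IntervalIntegrable f volume (-a) 0 := by
      simpa [hf] using (hright.comp_sub_left 0).symm
    have hreflect : ∫ x in -a..0, f x = ∫ x in (0 : ℝ)..a, f x := by
      simpa [hf] using (intervalIntegral.integral_comp_neg f (a := -a) (b := 0))
    rw [← intervalIntegral.integral_add_adjacent_intervals hleft hright, hreflect, two_smul]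
  · have hfull : ¬ IntervalIntegrable f volume (-a) a := fun h ↦
      hright <| h.mono_set <| uIcc_subset_uIcc_right <| by
        rcases le_total 0 a with ha | ha <;> simp [ha]
    rw [intervalIntegral.integral_undef hright, intervalIntegral.integral_undef hfull, smul_zero]

lemma one_sub_sq_pos_of_mem_Ioo {x : ℝ} (hx : x ∈ Ioo (0 : ℝ) 1) : 0 < 1 - x ^ 2 :=
  sub_pos.2 <| pow_lt_one₀ hx.1.le hx.2 two_ne_zero

lemma hasDerivAt_sq_div_one_sub_sq {x : ℝ} (hx : 1 - x ^ 2 ≠ 0) :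
    HasDerivAt (fun x : ℝ ↦ x ^ 2 / (1 - x ^ 2)) (2 * x / (1 - x ^ 2) ^ 2) x := by
  have hsq : HasDerivAt (fun x : ℝ ↦ x ^ 2) (2 * x) x := by simpa using hasDerivAt_pow 2 x
  exact (hsq.div (hsq.const_sub 1) hx).congr_deriv (by ring)

lemma monotoneOn_sq_div_one_sub_sq :
    MonotoneOn (fun x : ℝ ↦ x ^ 2 / (1 - x ^ 2)) (Ioo 0 1) := by
  intro x hx y hy hxy
  have hsq : x ^ 2 ≤ y ^ 2 := pow_le_pow_left₀ hx.1.le hxy 2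
  have hpos : 0 < 1 - y ^ 2 := one_sub_sq_pos_of_mem_Ioo hy
  dsimp only
  gcongr

lemma image_sq_div_one_sub_sq :
    (fun x : ℝ ↦ x ^ 2 / (1 - x ^ 2)) '' Ioo 0 1 = Ioi 0 := by
  apply Subset.antisymm
  · rintro _ ⟨x, hx, rfl⟩
    exact div_pos (pow_pos hx.1 2) (one_sub_sq_pos_of_mem_Ioo hx)
  · intro z (hz : 0 < z)
    have hlt : z / (1 + z) < 1 := (div_lt_one (by positivity)).2 (by linarith)
    refine ⟨√(z / (1 + z)), ⟨by positivity, (Real.sqrt_lt' one_pos).2 (by simpa using hlt)⟩, ?_⟩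
    dsimp only
    rw [Real.sq_sqrt (by positivity)]
    field_simp
    ring

theorem integral_Ioi_smul_comp_inv_one_add (F : ℝ → E) :
    ∫ z in Ioi (0 : ℝ), ((1 + z) ^ (-(3 : ℝ) / 2) * z ^ (-(1 : ℝ) / 2)) • F (1 + z)⁻¹ =
      (2 : ℝ) • ∫ x in (0 : ℝ)..1, F (1 - x ^ 2) := by
  rw [← image_sq_div_one_sub_sq,
    integral_image_eq_integral_deriv_smul_of_monotoneOn measurableSet_Ioo
      (fun x hx ↦ (hasDerivAt_sq_div_one_sub_sq
        (one_sub_sq_pos_of_mem_Ioo hx).ne').hasDerivWithinAt) monotoneOn_sq_div_one_sub_sq,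
    intervalIntegral.integral_of_le zero_le_one, integral_Ioc_eq_integral_Ioo, ← integral_smul]
  refine setIntegral_congr_fun measurableSet_Ioo fun x hx ↦ ?_
  have hx0 : 0 < x := hx.1
  have hpos : 0 < 1 - x ^ 2 := one_sub_sq_pos_of_mem_Ioo hx
  have hadd : 1 + x ^ 2 / (1 - x ^ 2) = (1 - x ^ 2)⁻¹ := by field_simp; ring
  have hweight : (1 - x ^ 2)⁻¹ ^ (-(3 : ℝ) / 2) * (x ^ 2 / (1 - x ^ 2)) ^ (-(1 : ℝ) / 2) =
      (1 - x ^ 2) ^ 2 / x := by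
    rw [Real.div_rpow (sq_nonneg x) hpos.le, Real.inv_rpow hpos.le, ← Real.rpow_neg hpos.le,
      mul_div_left_comm, ← Real.rpow_sub hpos, ← Real.rpow_natCast_mul hx0.le]
    norm_num [Real.rpow_neg_one]
    ring
  rw [hadd, inv_inv, hweight, smul_smul]
  congr 1
  field_simp

theorem intervalIntegral_comp_mul_sub (F : ℝ → E) (s : ℝ) :
    ∫ t in (0 : ℝ)..s, F (t * (s - t)) =
      (s / 2) • ∫ z in Ioi (0 : ℝ),
        ((1 + z) ^ (-(3 : ℝ) / 2) * z ^ (-(1 : ℝ) / 2)) • F (s ^ 2 / 4 * (1 + z)⁻¹) := by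
  calc
    _ = (s / 2) • ∫ x in (-1 : ℝ)..1, F (s ^ 2 / 4 * (1 - x ^ 2)) := by
      have h := intervalIntegral.smul_integral_comp_mul_add (a := -1) (b := 1)
        (fun t ↦ F (t * (s - t))) (s / 2) (s / 2)
      convert h.symm using 4 <;> ring_nf
    _ = (s / 2) • (2 : ℝ) • ∫ x in (0 : ℝ)..1, F (s ^ 2 / 4 * (1 - x ^ 2)) := by
      rw [intervalIntegral_neg_self_of_even (f := fun x ↦ F (s ^ 2 / 4 * (1 - x ^ 2)))
        fun x ↦ by simp only [neg_sq]]
    _ = _ := by rw [integral_Ioi_smul_comp_inv_one_add (F := fun p ↦ F (s ^ 2 / 4 * p))]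

end ChangeOfVariables

theorem integral_mul_sub_rpow_mul_exp (ν k s : ℝ) :
    ∫ t in (0 : ℝ)..s, (t * (s - t)) ^ (-ν) * exp (-k / (t * (s - t))) =
      s / 2 * (s ^ 2 / 4) ^ (-ν) * exp (-(4 * k / s ^ 2)) *
        ∫ z in Ioi (0 : ℝ),
          (1 + z) ^ (ν - 3 / 2) * z ^ (-(1 : ℝ) / 2) * exp (-(4 * k / s ^ 2) * z) := by
  rw [intervalIntegral_comp_mul_sub fun p ↦ p ^ (-ν) * exp (-k / p), smul_eq_mul,
    ← integral_const_mul, ← integral_const_mul]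
  refine setIntegral_congr_fun measurableSet_Ioi fun z (hz : 0 < z) ↦ ?_
  have hz1 : 0 < 1 + z := by positivity
  have hexp : exp (-k / (s ^ 2 / 4 * (1 + z)⁻¹)) =
      exp (-(4 * k / s ^ 2)) * exp (-(4 * k / s ^ 2) * z) := by
    rw [← exp_add, div_mul_eq_div_div, div_inv_eq_mul]
    congr 1
    ring
  have hpow : (1 + z) ^ (ν - 3 / 2) = (1 + z) ^ ν * (1 + z) ^ (-(3 : ℝ) / 2) := by
    rw [← Real.rpow_add hz1]; ring_nf
  have hscale : (s ^ 2 / 4 * (1 + z)⁻¹) ^ (-ν) = (s ^ 2 / 4) ^ (-ν) * (1 + z) ^ ν := by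
    rw [Real.mul_rpow (by positivity) (by positivity), Real.inv_rpow hz1.le,
      Real.rpow_neg hz1.le, inv_inv]
  simp only [smul_eq_mul, hexp, hpow, hscale]
  ring

lemma half_mul_sq_div_four_rpow_neg (ν : ℝ) {s : ℝ} (hs : 0 < s) :
    s / 2 * (s ^ 2 / 4) ^ (-ν) = 2 * 4 ^ (ν - 1) * s ^ (1 - 2 * ν) := by
  rw [Real.div_rpow (by positivity) (by norm_num), ← Real.rpow_natCast_mul hs.le,
    Real.rpow_neg zero_le_four, div_inv_eq_mul, Real.rpow_sub_one four_ne_zero,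
    sub_eq_add_neg, Real.rpow_add hs, Real.rpow_one]
  push_cast
  rw [mul_neg]
  ring

lemma integral_rpow_mul_exp_mul_comp_sub (ν c s : ℝ) (hs : 0 ≤ s) :
    ∫ t in (0 : ℝ)..s, (t ^ (-ν) * exp (-c / t)) * ((s - t) ^ (-ν) * exp (-c / (s - t))) =
      ∫ t in (0 : ℝ)..s, (t * (s - t)) ^ (-ν) * exp (-(c * s) / (t * (s - t))) := by
  refine intervalIntegral.integral_congr_Ioo_of_le hs fun t ht ↦ ?_
  have ht0 : 0 < t := ht.1
  have hst : 0 < s - t := sub_pos.2 ht.2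
  have hexp : -(c * s) / (t * (s - t)) = -c / t + -c / (s - t) := by field_simp; ring
  rw [Real.mul_rpow ht0.le hst.le, hexp, exp_add]
  ring

lemma sqrt_pi_mul_tricomiU_one_half (b z : ℝ) :
    √π * tricomiU (1 / 2) b z =
      ∫ x in Ioi (0 : ℝ), (1 + x) ^ (b - 3 / 2) * x ^ (-(1 : ℝ) / 2) * exp (-z * x) := by
  rw [tricomiU, Real.Gamma_one_half_eq, ← mul_assoc, mul_one_div_cancel (by positivity), one_mul]
  congr 1 with x
  ring_nf

theorem stmt7_general :
    ∀ ν c s : ℝ, 0 < c → 0 < s →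
      ((∫ t in (0 : ℝ)..s, (t * (s - t)) ^ (-ν) * exp (-(c * s) / (t * (s - t)))) =
        2 * 4 ^ (ν - 1) * s ^ (1 - 2 * ν) * exp (-(4 * c / s)) *
          ∫ z in Ioi (0 : ℝ), (1 + z) ^ (ν - 3 / 2) * z ^ (-(1 : ℝ) / 2) * exp (-(4 * c / s) * z)) ∧
      ((∫ t in (0 : ℝ)..s, (t ^ (-ν) * exp (-c / t)) * ((s - t) ^ (-ν) * exp (-c / (s - t)))) =
        2 * 4 ^ (ν - 1) * √π * s ^ (1 - 2 * ν) * exp (-(4 * c / s)) *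
          tricomiU (1 / 2) ν (4 * c / s)) := by
  intro ν c s _ hs
  have hrate : 4 * (c * s) / s ^ 2 = 4 * c / s := by field_simp
  have hmain := integral_mul_sub_rpow_mul_exp ν (c * s) s
  rw [hrate, half_mul_sq_div_four_rpow_neg ν hs] at hmain
  refine ⟨hmain, ?_⟩
  rw [integral_rpow_mul_exp_mul_comp_sub ν c s hs.le, hmain, ← sqrt_pi_mul_tricomiU_one_half]
  ring

/-- the self-convolution of `f(t) = t^{-4/3}·e^{-2/(9t)}` equals
`2·4^{1/3}·√π·s^{-5/3}·e^{-8/(9s)}·U(1/2,4/3;8/(9s))`. -/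
theorem stmt7 :
    ∀ s : ℝ, 0 < s →
      ((∫ t in (0:ℝ)..s, (t * (s - t)) ^ (-(4:ℝ)/3) * Real.exp (-(2 * s) / (9 * t * (s - t)))) =
        2 * (4:ℝ) ^ ((1:ℝ)/3) * s ^ (-(5:ℝ)/3) * Real.exp (-8 / (9 * s)) *
          ∫ z in Ioi (0:ℝ), (1 + z) ^ (-(1:ℝ)/6) * z ^ (-(1:ℝ)/2) * Real.exp (-8 * z / (9 * s))) ∧
      ((∫ t in (0:ℝ)..s, (t ^ (-(4:ℝ)/3) * Real.exp (-2 / (9 * t))) *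
          ((s - t) ^ (-(4:ℝ)/3) * Real.exp (-2 / (9 * (s - t))))) =
        2 * (4:ℝ) ^ ((1:ℝ)/3) * Real.sqrt π * s ^ (-(5:ℝ)/3) * Real.exp (-8 / (9 * s)) *
          tricomiU (1/2) (4/3) (8 / (9 * s))) := by
  intro s hs
  rw [show 8 / (9 * s) = 4 * (2 / 9) / s by ring]
  convert stmt7_general (4 / 3) (2 / 9) s (by norm_num) hs using 5 <;>
    simp only [div_eq_mul_inv, mul_inv] <;> ring_nf
end
end

section
/- Kummer's identity for Tricomi functions in integral form: for all real a > 0, b < 1 and z > 0, (1/Γ(a))·∫₀^∞ e^{-zs}·s^{a-1}·(1+s)^{b-a-1} ds = z^{1-b}·(1/Γ(1+a-b))·∫₀^∞ e^{-zs}·s^{a-b}·(1+s)^{-a} ds; that is, U(a,b;z) = z^{1-b}·U(1+a-b, 2-b; z). -/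
open Real MeasureTheory Set Filter Topology

noncomputable section

/-!
Put `c = 1 + a - b`. Since `Γ(c) (q + s)^(-c)` is the Laplace transform of `t^(c-1) e^(-qt)`, and
the Laplace transform is symmetric for the pairing `∫ f g`, the integral over `s > 0` of
`e^(-ps) s^(a-1) (q + s)^(-c)` is unchanged, up to Gamma factors, by swapping `(a, p)` and `(c, q)`.
At `(p, q) = (z, 1)` the swap yields `(1, z)`, and the substitution `s ↦ z s` brings this back to
`(z, 1)` at the cost of the factor `z^(c-a) = z^(1-b)`.
-/

lemma integrable_mul_mul_exp_neg_mul {f g : ℝ → ℝ} (hf : IntegrableOn f (Ioi 0))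
    (hg : IntegrableOn g (Ioi 0)) :
    Integrable (Function.uncurry fun s t ↦ f s * g t * exp (-(s * t)))
      ((volume.restrict (Ioi 0)).prod (volume.restrict (Ioi 0))) := by
  refine (hf.mul_prod hg).mul_bdd (c := 1) (by fun_prop) ?_
  rw [Measure.prod_restrict]
  filter_upwards [ae_restrict_mem (measurableSet_Ioi.prod measurableSet_Ioi)] with x ⟨hs, ht⟩
  simpa only [norm_eq_abs, abs_exp, exp_le_one_iff, neg_nonpos] using (mul_pos hs ht).le

lemma integral_mul_laplace_comm {f g : ℝ → ℝ} (hf : IntegrableOn f (Ioi 0))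
    (hg : IntegrableOn g (Ioi 0)) :
    ∫ s in Ioi 0, f s * ∫ t in Ioi 0, g t * exp (-(s * t)) =
      ∫ t in Ioi 0, g t * ∫ s in Ioi 0, f s * exp (-(t * s)) := by
  calc
    _ = ∫ s in Ioi 0, ∫ t in Ioi 0, f s * g t * exp (-(s * t)) := by
      simp only [← integral_const_mul, mul_assoc]
    _ = ∫ t in Ioi 0, ∫ s in Ioi 0, f s * g t * exp (-(s * t)) :=
      integral_integral_swap (integrable_mul_mul_exp_neg_mul hf hg)
    _ = _ := by
      simp only [← integral_const_mul, mul_assoc, mul_left_comm, mul_comm]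

lemma integrableOn_exp_neg_mul_mul_rpow {a p : ℝ} (ha : 0 < a) (hp : 0 < p) :
    IntegrableOn (fun s : ℝ ↦ exp (-p * s) * s ^ (a - 1)) (Ioi 0) := by
  simpa only [rpow_one, mul_comm] using
    integrableOn_rpow_mul_exp_neg_mul_rpow (s := a - 1) (by linarith) one_pos hp

lemma laplace_exp_neg_mul_mul_rpow {a p t : ℝ} (ha : 0 < a) (hpt : 0 < p + t) :
    ∫ s in Ioi 0, exp (-p * s) * s ^ (a - 1) * exp (-(t * s)) = Gamma a * (p + t) ^ (-a) := by
  calc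
    _ = ∫ s in Ioi 0, s ^ (a - 1) * exp (-((p + t) * s)) := by
      congr! 2 with s
      rw [mul_right_comm, ← exp_add, mul_comm]
      ring_nf
    _ = (1 / (p + t)) ^ a * Gamma a := integral_rpow_mul_exp_neg_mul_Ioi ha hpt
    _ = Gamma a * (p + t) ^ (-a) := by
      rw [one_div, inv_rpow hpt.le, rpow_neg hpt.le, mul_comm]

/-- The Stieltjes transform of order `c`, evaluated at `q`, of the unnormalised Gamma density
`e^(-ps) s^(a-1)`. Keeping `p` and `q` independent makes Kummer's identity a symmetry. -/
def gammaStieltjes (a c p q : ℝ) : ℝ :=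
  ∫ s in Ioi 0, exp (-p * s) * s ^ (a - 1) * (q + s) ^ (-c)

lemma Gamma_mul_gammaStieltjes {a c p q : ℝ} (hc : 0 < c) (hq : 0 ≤ q) :
    Gamma c * gammaStieltjes a c p q =
      ∫ s in Ioi 0, exp (-p * s) * s ^ (a - 1) *
        ∫ t in Ioi 0, exp (-q * t) * t ^ (c - 1) * exp (-(s * t)) := by
  rw [gammaStieltjes, ← integral_const_mul]
  refine setIntegral_congr_fun measurableSet_Ioi fun s (hs : 0 < s) ↦ ?_
  rw [laplace_exp_neg_mul_mul_rpow hc (add_pos_of_nonneg_of_pos hq hs)]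
  ring

lemma Gamma_mul_gammaStieltjes_comm {a c p q : ℝ} (ha : 0 < a) (hc : 0 < c) (hp : 0 < p)
    (hq : 0 < q) :
    Gamma c * gammaStieltjes a c p q = Gamma a * gammaStieltjes c a q p := by
  rw [Gamma_mul_gammaStieltjes hc hq.le, Gamma_mul_gammaStieltjes ha hp.le]
  exact integral_mul_laplace_comm (integrableOn_exp_neg_mul_mul_rpow ha hp)
    (integrableOn_exp_neg_mul_mul_rpow hc hq)

lemma gammaStieltjes_mul_right {a c p q k : ℝ} (hk : 0 < k) (hq : 0 ≤ q) :
    gammaStieltjes a c p (k * q) = k ^ (a - c) * gammaStieltjes a c (k * p) q := by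
  have integrand_scaling : ∀ s ∈ Ioi (0 : ℝ),
      k * (exp (-p * (k * s)) * (k * s) ^ (a - 1) * (k * q + k * s) ^ (-c)) =
        k ^ (a - c) * (exp (-(k * p) * s) * s ^ (a - 1) * (q + s) ^ (-c)) := by
    intro s (hs : 0 < s)
    have power_of_k : k ^ (a - c) = k * k ^ (a - 1) * k ^ (-c) := by
      rw [mul_comm k, ← rpow_add_one hk.ne', ← rpow_add hk]
      ring_nf
    rw [← mul_add, mul_rpow hk.le hs.le, mul_rpow hk.le (by positivity), power_of_k]
    ring_nf
  have substitution := integral_comp_mul_left_Ioi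
    (fun s ↦ exp (-p * s) * s ^ (a - 1) * (k * q + s) ^ (-c)) 0 hk
  rw [mul_zero, smul_eq_mul, eq_inv_mul_iff_mul_eq₀ hk.ne'] at substitution
  rw [gammaStieltjes, gammaStieltjes, ← substitution, ← integral_const_mul, ← integral_const_mul]
  exact setIntegral_congr_fun measurableSet_Ioi integrand_scaling

lemma tricomiU_eq_gammaStieltjes (a b z : ℝ) :
    tricomiU a b z = 1 / Gamma a * gammaStieltjes a (1 + a - b) z 1 := by
  rw [tricomiU, gammaStieltjes, show -(1 + a - b) = b - a - 1 by ring]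

theorem tricomiU_kummer {a b z : ℝ} (ha : 0 < a) (hb : b < 1 + a) (hz : 0 < z) :
    tricomiU a b z = z ^ (1 - b) * tricomiU (1 + a - b) (2 - b) z := by
  have hc : 0 < 1 + a - b := sub_pos.2 hb
  have swap := Gamma_mul_gammaStieltjes_comm ha hc hz one_pos
  have scale := gammaStieltjes_mul_right (a := 1 + a - b) (c := a) (p := 1) hz zero_le_one
  rw [mul_one, show 1 + a - b - a = 1 - b by ring] at scale
  rw [scale] at swap
  rw [tricomiU_eq_gammaStieltjes, tricomiU_eq_gammaStieltjes,
    show 1 + (1 + a - b) - (2 - b) = a by ring]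
  have Gamma_a_ne_zero := (Gamma_pos_of_pos ha).ne'
  have Gamma_c_ne_zero := (Gamma_pos_of_pos hc).ne'
  field_simp
  linarith

theorem stmt8_general (a b z : ℝ) (ha : 0 < a) (hb : b < 1 + a) (hz : 0 < z) :
    ((1 / Real.Gamma a) *
        (∫ s in Ioi (0:ℝ), Real.exp (-z * s) * s ^ (a - 1) * (1 + s) ^ (b - a - 1)) =
      z ^ (1 - b) * ((1 / Real.Gamma (1 + a - b)) *
        ∫ s in Ioi (0:ℝ), Real.exp (-z * s) * s ^ (a - b) * (1 + s) ^ (-a))) ∧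
    tricomiU a b z = z ^ (1 - b) * tricomiU (1 + a - b) (2 - b) z := by
  have kummer := tricomiU_kummer ha hb hz
  refine ⟨?_, kummer⟩
  rwa [tricomiU, tricomiU, show 1 + a - b - 1 = a - b by ring,
    show 2 - b - (1 + a - b) - 1 = -a by ring] at kummer

/-- Kummer's identity `U(a,b;z) = z^{1-b}·U(1+a-b,2-b;z)` for `a > 0`,
`b < 1`, `z > 0`, in integral form. -/
theorem stmt8 (a b z : ℝ) (ha : 0 < a) (hb : b < 1) (hz : 0 < z) :
    ((1 / Real.Gamma a) *
        (∫ s in Ioi (0:ℝ), Real.exp (-z * s) * s ^ (a - 1) * (1 + s) ^ (b - a - 1)) =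
      z ^ (1 - b) * ((1 / Real.Gamma (1 + a - b)) *
        ∫ s in Ioi (0:ℝ), Real.exp (-z * s) * s ^ (a - b) * (1 + s) ^ (-a))) ∧
    tricomiU a b z = z ^ (1 - b) * tricomiU (1 + a - b) (2 - b) z :=
  stmt8_general a b z ha (by linarith) hz
end
end

section
/- Let u be the normalized Airy function. For every λ > 0, the integral ∫₀^∞ u(λ+χ)·u(χ) dχ converges and equals (u'(0)·u(λ) - u'(λ))/(2λ). -/
open Real MeasureTheory Set Filter Topology

noncomputable section

/-!
If `f'' = p f` and `g'' = q g`, the Wronskian `f' g - f g'` has derivative `(p - q) f g`. The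
translate `u (l + ·)` of a solution of the Airy equation `u'' = 2 x u` has potential `2 x + 2 l`, so
here `p - q = 2 l` is constant and `2 l ∫ u (l + χ) u χ` is a boundary term.

Decay of `u` also controls `u'` and the sign of the integrand. Where the potential is nonnegative,
`(u²)'' ≥ 0`, so a bounded `u²` is nonincreasing; hence `u` never changes sign, and
`(u'²)' = p (u²)' ≤ 0` keeps `u'` bounded. The Wronskian then tends to zero, and the integrand,
being eventually nonnegative with a convergent primitive, is integrable.
-/

theorem nonpos_of_monotoneOn_deriv_of_isBoundedUnder {f f' : ℝ → ℝ} {a : ℝ}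
    (hf : ∀ x ∈ Ici a, HasDerivAt f (f' x) x) (hmono : MonotoneOn f' (Ici a))
    (hbdd : IsBoundedUnder (· ≤ ·) atTop f) : ∀ x ∈ Ici a, f' x ≤ 0 := by
  intro x hx
  by_contra! hpos
  have tangent_le : ∀ y ∈ Ici x, f x + f' x * (y - x) ≤ f y := by
    intro y hy
    have hsub : Ici x ⊆ Ici a := Ici_subset_Ici.2 hx
    have := (convex_Ici x).mul_sub_le_image_sub_of_le_deriv
      (fun z hz ↦ (hf z (hsub hz)).continuousAt.continuousWithinAt)
      (fun z hz ↦ (hf z (hsub (interior_subset hz))).differentiableAt.differentiableWithinAt)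
      (C := f' x)
      (fun z hz ↦ by
        rw [(hf z (hsub (interior_subset hz))).deriv]
        exact hmono hx (hsub (interior_subset hz)) (interior_subset hz))
      x self_mem_Ici y hy hy
    linarith
  have tangent_tendsto : Tendsto (fun y ↦ f x + f' x * (y - x)) atTop atTop :=
    tendsto_atTop_add_const_left _ _
      ((tendsto_atTop_add_const_right _ (-x) tendsto_id).const_mul_atTop hpos)
  exact not_isBoundedUnder_of_tendsto_atTop
    (tendsto_atTop_mono' _ ((eventually_ge_atTop x).mono tangent_le) tangent_tendsto) hbdd

theorem mul_nonneg_of_antitoneOn_sq {f : ℝ → ℝ} {s : Set ℝ} [s.OrdConnected]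
    (hf : ContinuousOn f s) (hanti : AntitoneOn (fun x ↦ f x ^ 2) s) {x y : ℝ}
    (hx : x ∈ s) (hy : y ∈ s) : 0 ≤ f x * f y := by
  wlog hxy : x ≤ y generalizing x y
  · rw [mul_comm]
    exact this hy hx (le_of_not_ge hxy)
  by_contra! hneg
  have hsub : uIcc x y ⊆ s := OrdConnected.uIcc_subset ‹_› hx hy
  have hzero : (0 : ℝ) ∈ uIcc (f x) (f y) := by
    rcases mul_neg_iff.1 hneg with ⟨hfx, hfy⟩ | ⟨hfx, hfy⟩
    · exact mem_uIcc_of_ge hfy.le hfx.le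
    · exact mem_uIcc_of_le hfx.le hfy.le
  obtain ⟨c, hc, hfc⟩ := intermediate_value_uIcc (hf.mono hsub) hzero
  have hcy : c ≤ y := (uIcc_of_le hxy ▸ hc).2
  have hfy : f y ^ 2 ≤ 0 := by simpa [hfc] using hanti (hsub hc) hy hcy
  have : f y = 0 := by simpa using hfy.antisymm (sq_nonneg _)
  simp [this] at hneg

theorem integrableOn_Ioi_deriv_of_eventually_nonneg {F F' : ℝ → ℝ} {a m : ℝ}
    (hderiv : ∀ x ∈ Ici a, HasDerivAt F (F' x) x) (hcont : ContinuousOn F' (Ici a))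
    (hnonneg : ∀ᶠ x in atTop, 0 ≤ F' x) (hlim : Tendsto F atTop (𝓝 m)) :
    IntegrableOn F' (Ioi a) := by
  obtain ⟨b, hab, hb⟩ :=
    ((eventually_ge_atTop a).and (eventually_forall_ge_atTop.2 hnonneg)).exists
  have htail : IntegrableOn F' (Ioi b) :=
    integrableOn_Ioi_deriv_of_nonneg' (fun x hx ↦ hderiv x (hab.trans hx))
      (fun x hx ↦ hb x (le_of_lt hx)) hlim
  have hlocal : LocallyIntegrableOn F' (Ici a) := hcont.locallyIntegrableOn measurableSet_Ici
  exact (integrableOn_Ici_iff_integrableAtFilter_atTop.2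
    ⟨⟨Ioi b, Ioi_mem_atTop b, htail⟩, hlocal⟩).mono_set Ioi_subset_Ici_self

/-- `u` solves the linear equation `u'' = p u` on `s`. The derivative `u'` is carried as an explicit
function, and both derivatives are two-sided, also at boundary points of `s`. -/
structure IsSturmSolutionOn (p u u' : ℝ → ℝ) (s : Set ℝ) : Prop where
  hasDerivAt : ∀ x ∈ s, HasDerivAt u (u' x) x
  hasDerivAt_deriv : ∀ x ∈ s, HasDerivAt u' (p x * u x) x

namespace IsSturmSolutionOn

variable {p q u u' f f' g g' : ℝ → ℝ} {s t : Set ℝ} {a c m : ℝ}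

theorem mono (hu : IsSturmSolutionOn p u u' t) (hst : s ⊆ t) : IsSturmSolutionOn p u u' s :=
  ⟨fun x hx ↦ hu.hasDerivAt x (hst hx), fun x hx ↦ hu.hasDerivAt_deriv x (hst hx)⟩

theorem comp_const_add (hu : IsSturmSolutionOn p u u' s) (l : ℝ) :
    IsSturmSolutionOn (fun x ↦ p (l + x)) (fun x ↦ u (l + x)) (fun x ↦ u' (l + x))
      ((l + ·) ⁻¹' s) :=
  ⟨fun x hx ↦ (hu.hasDerivAt (l + x) hx).comp_const_add l x,
    fun x hx ↦ (hu.hasDerivAt_deriv (l + x) hx).comp_const_add l x⟩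

theorem continuousOn (hu : IsSturmSolutionOn p u u' s) : ContinuousOn u s :=
  fun x hx ↦ (hu.hasDerivAt x hx).continuousAt.continuousWithinAt

theorem hasDerivAt_wronskian (hf : IsSturmSolutionOn p f f' s) (hg : IsSturmSolutionOn q g g' s)
    {x : ℝ} (hx : x ∈ s) :
    HasDerivAt (fun x ↦ f' x * g x - f x * g' x) ((p x - q x) * (f x * g x)) x := by
  refine (((hf.hasDerivAt_deriv x hx).mul (hg.hasDerivAt x hx)).sub
    ((hf.hasDerivAt x hx).mul (hg.hasDerivAt_deriv x hx))).congr_deriv ?_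
  ring

theorem hasDerivAt_wronskian_div (hf : IsSturmSolutionOn p f f' s)
    (hg : IsSturmSolutionOn q g g' s) (hc : c ≠ 0) (hpq : ∀ x ∈ s, p x - q x = c)
    {x : ℝ} (hx : x ∈ s) :
    HasDerivAt (fun x ↦ (f' x * g x - f x * g' x) / c) (f x * g x) x := by
  refine ((hf.hasDerivAt_wronskian hg hx).div_const c).congr_deriv ?_
  rw [hpq x hx, mul_div_cancel_left₀ _ hc]

theorem integrableOn_Ioi_mul (hf : IsSturmSolutionOn p f f' (Ici a))
    (hg : IsSturmSolutionOn q g g' (Ici a)) (hc : c ≠ 0) (hpq : ∀ x ∈ Ici a, p x - q x = c)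
    (hfg : ∀ᶠ x in atTop, 0 ≤ f x * g x)
    (hlim : Tendsto (fun x ↦ f' x * g x - f x * g' x) atTop (𝓝 m)) :
    IntegrableOn (fun x ↦ f x * g x) (Ioi a) :=
  integrableOn_Ioi_deriv_of_eventually_nonneg
    (fun _ hx ↦ hf.hasDerivAt_wronskian_div hg hc hpq hx) (hf.continuousOn.mul hg.continuousOn)
    hfg (hlim.div_const c)

theorem integral_Ioi_mul (hf : IsSturmSolutionOn p f f' (Ici a))
    (hg : IsSturmSolutionOn q g g' (Ici a)) (hc : c ≠ 0) (hpq : ∀ x ∈ Ici a, p x - q x = c)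
    (hint : IntegrableOn (fun x ↦ f x * g x) (Ioi a))
    (hlim : Tendsto (fun x ↦ f' x * g x - f x * g' x) atTop (𝓝 m)) :
    ∫ x in Ioi a, f x * g x = (m - (f' a * g a - f a * g' a)) / c := by
  rw [integral_Ioi_of_hasDerivAt_of_tendsto'
    (fun _ hx ↦ hf.hasDerivAt_wronskian_div hg hc hpq hx) hint (hlim.div_const c), ← sub_div]

theorem hasDerivAt_sq (hu : IsSturmSolutionOn p u u' s) {x : ℝ} (hx : x ∈ s) :
    HasDerivAt (fun x ↦ u x ^ 2) (2 * (u x * u' x)) x :=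
  ((hu.hasDerivAt x hx).pow 2).congr_deriv (by ring)

theorem monotoneOn_mul_deriv (hu : IsSturmSolutionOn p u u' s) (hs : Convex ℝ s)
    (hp : ∀ x ∈ s, 0 ≤ p x) : MonotoneOn (fun x ↦ u x * u' x) s := by
  have hderiv : ∀ x ∈ s, HasDerivAt (fun x ↦ u x * u' x) (u' x ^ 2 + p x * u x ^ 2) x :=
    fun x hx ↦ ((hu.hasDerivAt x hx).mul (hu.hasDerivAt_deriv x hx)).congr_deriv (by ring)
  refine monotoneOn_of_hasDerivWithinAt_nonneg hs
    (fun x hx ↦ (hderiv x hx).continuousAt.continuousWithinAt)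
    (fun x hx ↦ (hderiv x (interior_subset hx)).hasDerivWithinAt) fun x hx ↦ ?_
  have := hp x (interior_subset hx)
  positivity

theorem mul_deriv_nonpos (hu : IsSturmSolutionOn p u u' (Ici a)) (hp : ∀ x ∈ Ici a, 0 ≤ p x)
    (hbdd : IsBoundedUnder (· ≤ ·) atTop fun x ↦ u x ^ 2) {x : ℝ} (hx : x ∈ Ici a) :
    u x * u' x ≤ 0 := by
  have := nonpos_of_monotoneOn_deriv_of_isBoundedUnder (fun _ hx ↦ hu.hasDerivAt_sq hx)
    (fun _ hx _ hy hxy ↦ mul_le_mul_of_nonneg_left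
      (hu.monotoneOn_mul_deriv (convex_Ici a) hp hx hy hxy) zero_le_two) hbdd x hx
  linarith

theorem antitoneOn_sq (hu : IsSturmSolutionOn p u u' (Ici a)) (hp : ∀ x ∈ Ici a, 0 ≤ p x)
    (hbdd : IsBoundedUnder (· ≤ ·) atTop fun x ↦ u x ^ 2) :
    AntitoneOn (fun x ↦ u x ^ 2) (Ici a) :=
  antitoneOn_of_hasDerivWithinAt_nonpos (convex_Ici a) (hu.continuousOn.pow 2)
    (fun _ hx ↦ (hu.hasDerivAt_sq (interior_subset hx)).hasDerivWithinAt)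
    fun _ hx ↦ mul_nonpos_of_nonneg_of_nonpos zero_le_two
      (hu.mul_deriv_nonpos hp hbdd (interior_subset hx))

theorem antitoneOn_deriv_sq (hu : IsSturmSolutionOn p u u' (Ici a)) (hp : ∀ x ∈ Ici a, 0 ≤ p x)
    (hbdd : IsBoundedUnder (· ≤ ·) atTop fun x ↦ u x ^ 2) :
    AntitoneOn (fun x ↦ u' x ^ 2) (Ici a) := by
  have hderiv : ∀ x ∈ Ici a, HasDerivAt (fun x ↦ u' x ^ 2) (2 * p x * (u x * u' x)) x :=
    fun x hx ↦ ((hu.hasDerivAt_deriv x hx).pow 2).congr_deriv (by ring)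
  exact antitoneOn_of_hasDerivWithinAt_nonpos (convex_Ici a)
    (fun x hx ↦ (hderiv x hx).continuousAt.continuousWithinAt)
    (fun x hx ↦ (hderiv x (interior_subset hx)).hasDerivWithinAt)
    fun x hx ↦ mul_nonpos_of_nonneg_of_nonpos
      (mul_nonneg zero_le_two (hp x (interior_subset hx)))
      (hu.mul_deriv_nonpos hp hbdd (interior_subset hx))

theorem isBoundedUnder_norm_deriv (hu : IsSturmSolutionOn p u u' (Ici a))
    (hp : ∀ x ∈ Ici a, 0 ≤ p x) (hbdd : IsBoundedUnder (· ≤ ·) atTop fun x ↦ u x ^ 2) :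
    IsBoundedUnder (· ≤ ·) atTop (norm ∘ u') :=
  isBoundedUnder_of_eventually_le <| (eventually_ge_atTop a).mono fun _ hx ↦
    sq_le_sq.1 (hu.antitoneOn_deriv_sq hp hbdd self_mem_Ici hx hx)

end IsSturmSolutionOn

theorem stmt9_general {u u' : ℝ → ℝ} (hu : ∀ x, HasDerivAt u (u' x) x)
    (hu' : ∀ x, HasDerivAt u' (2 * x * u x) x) (hu_lim : Tendsto u atTop (𝓝 0)) (a : ℝ) {l : ℝ}
    (hl : l ≠ 0) :
    IntegrableOn (fun χ ↦ u (l + χ) * u χ) (Ioi a) ∧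
      ∫ χ in Ioi a, u (l + χ) * u χ = (u (l + a) * u' a - u' (l + a) * u a) / (2 * l) := by
  have airy : IsSturmSolutionOn (2 * ·) u u' univ := ⟨fun x _ ↦ hu x, fun x _ ↦ hu' x⟩
  have airy_Ici : IsSturmSolutionOn (2 * ·) u u' (Ici 0) := airy.mono (subset_univ _)
  have hp : ∀ x ∈ Ici (0 : ℝ), 0 ≤ 2 * x := fun x hx ↦ mul_nonneg zero_le_two hx
  have hbdd := (hu_lim.pow 2).isBoundedUnder_le
  have hshift : Tendsto (l + ·) atTop atTop := tendsto_atTop_add_const_left _ l tendsto_id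
  have hu'_bdd := airy_Ici.isBoundedUnder_norm_deriv hp hbdd
  have hshift_lim : Tendsto (fun χ ↦ u (l + χ)) atTop (𝓝 0) := hu_lim.comp hshift
  have hshift'_bdd : IsBoundedUnder (· ≤ ·) atTop (norm ∘ fun χ ↦ u' (l + χ)) :=
    hshift.isBoundedUnder_comp hu'_bdd
  have hW : Tendsto (fun χ ↦ u' (l + χ) * u χ - u (l + χ) * u' χ) atTop (𝓝 0) := by
    simpa only [sub_zero] using (isBoundedUnder_le_mul_tendsto_zero hshift'_bdd hu_lim).sub
      (hshift_lim.zero_mul_isBoundedUnder_le hu'_bdd)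
  have hnonneg : ∀ᶠ χ in atTop, 0 ≤ u (l + χ) * u χ := by
    filter_upwards [hshift.eventually_ge_atTop 0, eventually_ge_atTop 0] with χ hlχ hχ
    exact mul_nonneg_of_antitoneOn_sq airy_Ici.continuousOn (airy_Ici.antitoneOn_sq hp hbdd) hlχ hχ
  have hf := (airy.comp_const_add l).mono (subset_univ (Ici a))
  have hg := airy.mono (subset_univ (Ici a))
  have hc : 2 * l ≠ 0 := mul_ne_zero two_ne_zero hl
  have hpq : ∀ χ ∈ Ici a, 2 * (l + χ) - 2 * χ = 2 * l := fun χ _ ↦ by ring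
  have hint := hf.integrableOn_Ioi_mul hg hc hpq hnonneg hW
  exact ⟨hint, by rw [hf.integral_Ioi_mul hg hc hpq hint hW, zero_sub, neg_sub]⟩

/-- for the normalized Airy function `u` and every `λ > 0`,
`∫₀^∞ u(λ+χ)·u(χ) dχ = (u'(0)·u(λ) - u'(λ))/(2λ)`. -/
theorem stmt9
    (u : ℝ → ℝ) (hu_smooth : ContDiff ℝ 2 u)
    (hu_ode : ∀ h : ℝ, deriv (deriv u) h = 2 * h * u h)
    (hu_zero : u 0 = 1)
    (hu'_zero : deriv u 0 = -((6:ℝ) ^ ((1:ℝ)/3) * Real.Gamma (2/3) / Real.Gamma (1/3)))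
    (hu_pos : ∀ h : ℝ, 0 ≤ h → 0 < u h)
    (hu_anti : StrictAntiOn u (Ici 0))
    (hu_lim : Tendsto u atTop (𝓝 0))
    (hu'_lim : Tendsto (deriv u) atTop (𝓝 0)) :
    ∀ l : ℝ, 0 < l →
      IntegrableOn (fun χ => u (l + χ) * u χ) (Ioi 0) ∧
      (∫ χ in Ioi (0:ℝ), u (l + χ) * u χ) = (deriv u 0 * u l - deriv u l) / (2 * l) := by
  intro l hl
  simpa [hu_zero, mul_comm] using stmt9_general
    (fun x ↦ (hu_smooth.differentiable two_ne_zero x).hasDerivAt)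
    (fun x ↦ hu_ode x ▸ (hu_smooth.differentiable_deriv_two x).hasDerivAt) hu_lim 0 hl.ne'
end
end
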